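/- arXiv:1711.02514 — 2 statements merged into one kernel-verified Lean document; each statement's English description precedes it below -/
import Mathlib

section
/- Let m ≥ 4, let P be a centrally symmetric convex 2m-gon, and let P + X be a k-fold translative tiling of the plane. Then for every vertex v ∈ V + X, the number of indices i with v ∈ int(P) + x_i (counted with multiplicity) is at most k − ⌈(m−1)/2⌉; equivalently, φ(v) = k − #{i : v ∈ int(P) + x_i} ≥ ⌈(m−1)/2⌉. -/
open Pointwise

/-- `K + X` is a `k`-fold translative tiling of the plane: the translate multiset
`(x i)` is discrete, every point of the plane belongs to at least `k` of the translates
`K + x i`, and every point belongs to at most `k` of the translates `interior K + x i`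
(multiplicity counted over the index set). -/
def IsKFoldTranslativeTiling {ι : Type} (K : Set (ℝ × ℝ)) (x : ι → ℝ × ℝ) (k : ℕ) : Prop :=
  (∀ R : ℝ, {i : ι | ‖x i‖ ≤ R}.Finite) ∧
  (∀ p : ℝ × ℝ, ∃ s : Finset ι, k ≤ s.card ∧ ∀ i ∈ s, p - x i ∈ K) ∧
  (∀ p : ℝ × ℝ, ∀ s : Finset ι, (∀ i ∈ s, p - x i ∈ interior K) → s.card ≤ k)

/-- `P` is a (two-dimensional) convex polygon whose vertex set is the finite set `V`:
`P` is the convex hull of `V`, every element of `V` is an extreme point of `P`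
(so `V` is exactly the vertex set), and `P` has nonempty interior. -/
def IsConvexPolygon (P : Set (ℝ × ℝ)) (V : Finset (ℝ × ℝ)) : Prop :=
  P = convexHull ℝ (V : Set (ℝ × ℝ)) ∧
  (∀ v ∈ V, v ∈ Set.extremePoints ℝ P) ∧
  (interior P).Nonempty

/-- `P` is symmetric about some point `c`. -/
def IsCentrallySymmetric (P : Set (ℝ × ℝ)) : Prop :=
  ∃ c : ℝ × ℝ, ∀ p ∈ P, 2 • c - p ∈ P

/-- The segment `[a, b]` is an edge of the convex polygon `P` with vertex set `V`. -/
def IsEdge (P : Set (ℝ × ℝ)) (V : Finset (ℝ × ℝ)) (a b : ℝ × ℝ) : Prop :=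
  a ∈ V ∧ b ∈ V ∧ a ≠ b ∧ segment ℝ a b ⊆ frontier P

/-!
Call `w`, `w'` strictly antipodal if some linear form `f` attains its maximum over `P` only at `w`
and its minimum only at `w'`. Let `u` span the kernel of `f`. Every chord of `P` parallel to `u`
has its relative interior in the interior of `P`, so from a point `y` of `P` a short step along
`u` leads either into the interior of `P` or out of `P`. Both steps `± u` lead inside if `y` is
interior, neither does if `y` is `w` or `w'`, and exactly one does otherwise. Since `v ± t • u` is
covered exactly `k` times for small `t > 0`, the number `I` of translates with `v` in the
interior, the number `T` of translates containing `v`, and the number `a w` of translates in which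
`v` is the vertex `w` satisfy `2 * k + (a w + a w') = I + T`.

In a centrally symmetric `2m`-gon each vertex is strictly antipodal to its reflection. Hence
`κ = a w + a w'` is the same for all `m` pairs of opposite vertices and `I + m * κ ≤ T`, which
gives `2 * I + (m - 1) * κ ≤ 2 * k`. Finally `1 ≤ κ` when `v` is a vertex of some translate.
-/

open Filter Set Topology Bornology

section ExposedPoints

variable {E : Type*} [AddCommGroup E] [Module ℝ E] [TopologicalSpace E]

lemma convex_insert_setOf_apply_lt (f : StrongDual ℝ E) (w : E) :
    Convex ℝ (insert w {p | f p < f w}) := by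
  have apply_le : ∀ p ∈ insert w {p | f p < f w}, f p ≤ f w := by
    rintro p (rfl | hp)
    exacts [le_rfl, le_of_lt hp]
  refine convex_iff_pairwise_pos.2 fun y hy z hz hyz a b ha hb hab ↦ Or.inr ?_
  have lt_or_lt : f y < f w ∨ f z < f w := by
    rcases hy with rfl | hy
    exacts [Or.inr (hz.resolve_left hyz.symm), Or.inl hy]
  have hwab : f w = a * f w + b * f w := by rw [← add_mul, hab, one_mul]
  simp only [mem_ofPred_eq, map_add, map_smul, smul_eq_mul]
  rw [hwab]
  rcases lt_or_lt with h | h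
  · exact add_lt_add_of_lt_of_le (mul_lt_mul_of_pos_left h ha)
      (mul_le_mul_of_nonneg_left (apply_le z hz) hb.le)
  · exact add_lt_add_of_le_of_lt (mul_le_mul_of_nonneg_left (apply_le y hy) ha.le)
      (mul_lt_mul_of_pos_left h hb)

lemma extremePoints_convexHull_subset_exposedPoints [IsTopologicalAddGroup E]
    [ContinuousSMul ℝ E] [LocallyConvexSpace ℝ E] [T2Space E] {s : Set E} (hs : s.Finite) :
    (convexHull ℝ s).extremePoints ℝ ⊆ (convexHull ℝ s).exposedPoints ℝ := by
  intro w hw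
  have hw_notMem : w ∉ convexHull ℝ (s \ {w}) := fun h ↦
    ((convex_convexHull ℝ s).mem_extremePoints_iff_mem_sdiff_convexHull_sdiff.1 hw).2
      (convexHull_mono (sdiff_subset_sdiff_left (subset_convexHull ℝ s)) h)
  obtain ⟨f, r, hf, hr⟩ := geometric_hahn_banach_closed_point (convex_convexHull ℝ _)
    ((hs.subset sdiff_subset).isClosed_convexHull (𝕜 := ℝ)) hw_notMem
  have hull_subset : convexHull ℝ s ⊆ insert w {p | f p < f w} := by
    refine convexHull_min (fun p hp ↦ ?_) (convex_insert_setOf_apply_lt f w)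
    rcases eq_or_ne p w with rfl | hpw
    · exact mem_insert _ _
    · exact Or.inr ((hf p (subset_convexHull ℝ _ ⟨hp, hpw⟩)).trans hr)
  refine ⟨hw.1, f, fun p hp ↦ ?_⟩
  rcases hull_subset hp with rfl | hlt
  exacts [⟨le_rfl, fun _ ↦ rfl⟩, ⟨le_of_lt hlt, fun hle ↦ absurd hlt hle.not_gt⟩]

end ExposedPoints

section StrictlyAntipodal

variable {E : Type*} [AddCommGroup E] [Module ℝ E] [TopologicalSpace E]

/-- The points `w` and `w'` form a strictly antipodal pair of `K`, witnessed by `f`: the parallel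
hyperplanes on which `f` takes the values `f w` and `f w'` support `K` and meet it only in `w` and
`w'`, respectively. -/
structure IsStrictlyAntipodal (f : StrongDual ℝ E) (K : Set E) (w w' : E) : Prop where
  ne : w ≠ w'
  left_mem : w ∈ K
  right_mem : w' ∈ K
  apply_lt_left : ∀ p ∈ K, p ≠ w → f p < f w
  right_lt_apply : ∀ p ∈ K, p ≠ w' → f w' < f p

lemma exists_isStrictlyAntipodal {K : Set E} (hK : K.Nontrivial) {c : E}
    (hsym : ∀ p ∈ K, 2 • c - p ∈ K) {w : E} (hw : w ∈ K.exposedPoints ℝ) :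
    ∃ f, IsStrictlyAntipodal f K w (2 • c - w) := by
  obtain ⟨hwK, f, hf⟩ := hw
  have apply_lt : ∀ p ∈ K, p ≠ w → f p < f w := fun p hp hpw ↦
    lt_of_not_ge fun hle ↦ hpw ((hf p hp).2 hle)
  have lt_apply : ∀ p ∈ K, p ≠ 2 • c - w → f (2 • c - w) < f p := fun p hp hpw ↦ by
    have := apply_lt _ (hsym p hp) fun h ↦ hpw (by rw [← h, sub_sub_cancel])
    simp only [map_sub] at this ⊢
    linarith
  obtain ⟨q, hq, hqw⟩ := hK.exists_ne w
  refine ⟨f, fun h ↦ ?_, hwK, hsym w hwK, apply_lt, lt_apply⟩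
  have := lt_apply q hq (h ▸ hqw)
  rw [← h] at this
  exact this.not_gt (apply_lt q hq hqw)

namespace IsStrictlyAntipodal

variable {f : StrongDual ℝ E} {K : Set E} {w w' : E}

lemma functional_ne_zero (h : IsStrictlyAntipodal f K w w') : f ≠ 0 := by
  rintro rfl
  exact lt_irrefl _ (h.apply_lt_left w' h.right_mem h.ne.symm)

lemma right_mem_exposedPoints (h : IsStrictlyAntipodal f K w w') : w' ∈ K.exposedPoints ℝ := by
  refine ⟨h.right_mem, -f, fun p hp ↦ ?_⟩
  simp only [neg_apply, neg_le_neg_iff]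
  rcases eq_or_ne p w' with rfl | hne
  · exact ⟨le_rfl, fun _ ↦ rfl⟩
  · exact ⟨(h.right_lt_apply p hp hne).le,
      fun hle ↦ absurd (h.right_lt_apply p hp hne) hle.not_gt⟩

lemma ne_and_ne_of_add_smul_mem (h : IsStrictlyAntipodal f K w w') {u : E} (hu : u ≠ 0)
    (hker : (f : E →ₗ[ℝ] ℝ).ker = ℝ ∙ u) {y : E} {t : ℝ} (ht : t ≠ 0) (hyt : y + t • u ∈ K) :
    y ≠ w ∧ y ≠ w' := by
  have hfu : f u = 0 := by
    simpa using (hker ▸ Submodule.mem_span_singleton_self u : u ∈ (f : E →ₗ[ℝ] ℝ).ker)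
  have hne : y + t • u ≠ y := by simp [ht, hu]
  have hf : f (y + t • u) = f y := by simp [hfu]
  constructor
  · rintro rfl
    exact (h.apply_lt_left _ hyt hne).ne hf
  · rintro rfl
    exact (h.right_lt_apply _ hyt hne).ne' hf

variable [IsTopologicalAddGroup E] [ContinuousSMul ℝ E]

lemma exists_mem_interior_apply_eq (h : IsStrictlyAntipodal f K w w') (hconv : Convex ℝ K)
    (hint : (interior K).Nonempty) {r : ℝ} (hr : r ∈ Ioo (f w') (f w)) :
    ∃ z ∈ interior K, f z = r := by
  have hdense : K ⊆ closure (interior K) := by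
    rw [hconv.closure_interior_eq_closure_of_nonempty_interior hint]
    exact subset_closure
  obtain ⟨a, ha, haK⟩ := mem_closure_iff.1 (hdense h.right_mem) {p | f p < r}
    (isOpen_lt f.continuous continuous_const) hr.1
  obtain ⟨b, hb, hbK⟩ := mem_closure_iff.1 (hdense h.left_mem) {p | r < f p}
    (isOpen_lt continuous_const f.continuous) hr.2
  exact hconv.interior.isPreconnected.intermediate_value haK hbK f.continuous.continuousOn
    ⟨le_of_lt ha, le_of_lt hb⟩

lemma exists_add_smul_mem_interior (h : IsStrictlyAntipodal f K w w') (hconv : Convex ℝ K)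
    (hint : (interior K).Nonempty) {u : E} (hker : (f : E →ₗ[ℝ] ℝ).ker = ℝ ∙ u) {y : E}
    (hy : y ∈ K) (hyw : y ≠ w) (hyw' : y ≠ w') : ∃ r : ℝ, y + r • u ∈ interior K := by
  obtain ⟨z, hz, hzy⟩ := h.exists_mem_interior_apply_eq hconv hint
    ⟨h.right_lt_apply y hy hyw', h.apply_lt_left y hy hyw⟩
  have hsub : z - y ∈ (f : E →ₗ[ℝ] ℝ).ker := by simp [hzy]
  obtain ⟨r, hr⟩ := Submodule.mem_span_singleton.1 (hker ▸ hsub)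
  exact ⟨r, by rwa [hr, add_sub_cancel]⟩

end IsStrictlyAntipodal

end StrictlyAntipodal

section Direction

lemma mem_openSegment_sub_smul_add_smul {E : Type*} [AddCommGroup E] [Module ℝ E] {y u : E}
    {s t : ℝ} (hs : 0 < s) (ht : 0 < t) :
    y ∈ openSegment ℝ (y - s • u) (y + t • u) := by
  refine ⟨t / (s + t), s / (s + t), by positivity, by positivity, by field_simp; ring, ?_⟩
  match_scalars <;> field_simp <;> ring

variable {E : Type*} [AddCommGroup E] [Module ℝ E] [TopologicalSpace E] {K : Set E} {u y : E}

/-- The points from which every short enough step in the direction `u` leads into the interior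
of `K`. If `K` is strictly convex along `u`, the translates of this half-open version of `K` cover
every point exactly `k` times when those of `K` form a `k`-fold tiling. -/
def directionalInterior (K : Set E) (u : E) : Set E :=
  {y | ∀ᶠ t in 𝓝[>] (0 : ℝ), y + t • u ∈ interior K}

/-- Strict convexity of `K` in the direction `u`: the relative interior of each chord of `K`
parallel to `u` lies in the interior of `K`. A short step along `u` from a point of a closed such
set therefore leads either into the interior or out of the set. -/
def IsStrictlyConvexAlong (K : Set E) (u : E) : Prop :=
  ∀ ⦃y : E⦄ ⦃s t : ℝ⦄, 0 < s → 0 < t → y - s • u ∈ K → y + t • u ∈ K → y ∈ interior K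

lemma IsStrictlyConvexAlong.neg (hu : IsStrictlyConvexAlong K u) :
    IsStrictlyConvexAlong K (-u) := fun y s t hs ht hys hyt ↦
  hu ht hs (by simpa [sub_eq_add_neg] using hyt) (by simpa using hys)

variable [IsTopologicalAddGroup E] [ContinuousSMul ℝ E]

lemma tendsto_add_smul_nhdsGT_zero (y u : E) :
    Tendsto (fun t : ℝ ↦ y + t • u) (𝓝[>] 0) (𝓝 y) := by
  have : Continuous fun t : ℝ ↦ y + t • u := by fun_prop
  exact tendsto_nhdsWithin_of_tendsto_nhds (this.tendsto' 0 y (by simp))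

lemma directionalInterior_subset (hK : IsClosed K) : directionalInterior K u ⊆ K := by
  intro y (hy : ∀ᶠ t in 𝓝[>] (0 : ℝ), y + t • u ∈ interior K)
  exact hK.mem_of_tendsto (tendsto_add_smul_nhdsGT_zero y u)
    (hy.mono fun _ ht ↦ interior_subset ht)

lemma interior_subset_directionalInterior : interior K ⊆ directionalInterior K u := fun y hy ↦
  (tendsto_add_smul_nhdsGT_zero y u).eventually (isOpen_interior.mem_nhds hy)

lemma mem_directionalInterior_iff (hK : IsClosed K) (hu : IsStrictlyConvexAlong K u) :
    y ∈ directionalInterior K u ↔ y ∈ K ∧ ∃ t : ℝ, 0 < t ∧ y + t • u ∈ K := by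
  constructor
  · intro (hy : ∀ᶠ t in 𝓝[>] (0 : ℝ), y + t • u ∈ interior K)
    obtain ⟨t, hyt, ht⟩ := (hy.and self_mem_nhdsWithin).exists
    exact ⟨directionalInterior_subset hK hy, t, ht, interior_subset hyt⟩
  · rintro ⟨hy, t, ht, hyt⟩
    filter_upwards [Ioo_mem_nhdsGT ht] with r hr
    refine hu hr.1 (sub_pos.2 hr.2) ?_ ?_
    · rwa [add_sub_cancel_right]
    · rwa [add_assoc, ← add_smul, add_sub_cancel]

lemma eventually_add_smul_mem_iff (hK : IsClosed K) (hu : IsStrictlyConvexAlong K u) {A : Set E}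
    (hKA : interior K ⊆ A) (hAK : A ⊆ K) (hy : y ∈ K) :
    ∀ᶠ t in 𝓝[>] (0 : ℝ), y + t • u ∈ A ↔ y ∈ directionalInterior K u := by
  by_cases h : y ∈ directionalInterior K u
  · filter_upwards [h] with t ht
    exact iff_of_true (hKA ht) h
  · filter_upwards [self_mem_nhdsWithin] with t ht
    exact iff_of_false
      (fun hyt ↦ h ((mem_directionalInterior_iff hK hu).2 ⟨hy, t, ht, hAK hyt⟩)) h

lemma directionalInterior_inter_neg (hK : IsClosed K) (hu : IsStrictlyConvexAlong K u) :
    directionalInterior K u ∩ directionalInterior K (-u) = interior K := by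
  refine Subset.antisymm (fun y ⟨hy, hy'⟩ ↦ ?_)
    (subset_inter interior_subset_directionalInterior interior_subset_directionalInterior)
  obtain ⟨-, t, ht, hyt⟩ := (mem_directionalInterior_iff hK hu).1 hy
  obtain ⟨-, s, hs, hys⟩ := (mem_directionalInterior_iff hK hu.neg).1 hy'
  exact hu hs ht (by simpa [sub_eq_add_neg] using hys) hyt

namespace IsStrictlyAntipodal

variable {f : StrongDual ℝ E} {w w' : E}

lemma isStrictlyConvexAlong (h : IsStrictlyAntipodal f K w w') (hconv : Convex ℝ K)
    (hint : (interior K).Nonempty) (hu : u ≠ 0) (hker : (f : E →ₗ[ℝ] ℝ).ker = ℝ ∙ u) :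
    IsStrictlyConvexAlong K u := by
  intro y s t hs ht hys hyt
  have hy : y ∈ K := hconv.openSegment_subset hys hyt (mem_openSegment_sub_smul_add_smul hs ht)
  obtain ⟨hyw, hyw'⟩ := h.ne_and_ne_of_add_smul_mem hu hker ht.ne' hyt
  obtain ⟨r, hr⟩ := h.exists_add_smul_mem_interior hconv hint hker hy hyw hyw'
  rcases lt_trichotomy r 0 with hr0 | rfl | hr0
  · have := mem_openSegment_sub_smul_add_smul (y := y) (u := u) (neg_pos.2 hr0) ht
    rw [neg_smul, sub_neg_eq_add] at this
    exact hconv.openSegment_interior_self_subset_interior hr hyt this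
  · simpa using hr
  · exact hconv.openSegment_self_interior_subset_interior hys hr
      (mem_openSegment_sub_smul_add_smul hs hr0)

lemma directionalInterior_union_neg (h : IsStrictlyAntipodal f K w w') (hK : IsClosed K)
    (hconv : Convex ℝ K) (hint : (interior K).Nonempty) (hu : u ≠ 0)
    (hker : (f : E →ₗ[ℝ] ℝ).ker = ℝ ∙ u) :
    directionalInterior K u ∪ directionalInterior K (-u) = K \ {w, w'} := by
  have hconv_u := h.isStrictlyConvexAlong hconv hint hu hker
  ext y
  rw [mem_union, mem_directionalInterior_iff hK hconv_u, mem_directionalInterior_iff hK hconv_u.neg,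
    ← and_or_left, Set.mem_sdiff, mem_insert_iff, mem_singleton_iff, not_or]
  refine and_congr_right fun hy ↦ ⟨?_, fun ⟨hyw, hyw'⟩ ↦ ?_⟩
  · rintro (⟨t, ht, hyt⟩ | ⟨t, ht, hyt⟩)
    · exact h.ne_and_ne_of_add_smul_mem hu hker ht.ne' hyt
    · rw [smul_neg, ← neg_smul] at hyt
      exact h.ne_and_ne_of_add_smul_mem hu hker (neg_ne_zero.2 ht.ne') hyt
  obtain ⟨r, hr⟩ := h.exists_add_smul_mem_interior hconv hint hker hy hyw hyw'
  rcases lt_trichotomy r 0 with hr0 | rfl | hr0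
  · exact Or.inr ⟨-r, neg_pos.2 hr0, by simpa using interior_subset hr⟩
  · have hy_int : y ∈ interior K := by simpa using hr
    exact Or.inl ((mem_directionalInterior_iff hK hconv_u).1
      (interior_subset_directionalInterior hy_int)).2
  · exact Or.inl ⟨r, hr0, interior_subset hr⟩

end IsStrictlyAntipodal

end Direction

lemma exists_ker_eq_span_singleton {K V : Type*} [Field K] [AddCommGroup V] [Module K V]
    (hV : Module.finrank K V = 2) {f : V →ₗ[K] K} (hf : f ≠ 0) :
    ∃ u ≠ 0, f.ker = Submodule.span K {u} := by
  have : FiniteDimensional K V := .of_finrank_eq_succ hV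
  have hker : Module.finrank K f.ker = 1 := by
    have := Module.Dual.finrank_ker_add_one_of_ne_zero hf
    omega
  obtain ⟨u, hu, hspan⟩ := finrank_eq_one_iff'.1 hker
  refine ⟨u, by simpa using hu, le_antisymm (fun z hz ↦ ?_) ?_⟩
  · obtain ⟨r, hr⟩ := hspan ⟨z, hz⟩
    exact Submodule.mem_span_singleton.2 ⟨r, congrArg Subtype.val hr⟩
  · rw [Submodule.span_singleton_le_iff_mem]
    exact u.2

section CoverCount

variable {ι E : Type*} {x : ι → E} {p : E}

/-- The number of translates `A + x i` that contain `p`. It is `0` by convention if infinitely many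
of them do. -/
noncomputable def coverCount [Sub E] (A : Set E) (x : ι → E) (p : E) : ℕ :=
  {i | p - x i ∈ A}.ncard

section Sub

variable [Sub E] {A B : Set E}

lemma coverCount_mono (hB : {i | p - x i ∈ B}.Finite) (hAB : A ⊆ B) :
    coverCount A x p ≤ coverCount B x p :=
  ncard_le_ncard (fun _ hi ↦ hAB hi) hB

lemma coverCount_union_add_coverCount_inter (hA : {i | p - x i ∈ A}.Finite)
    (hB : {i | p - x i ∈ B}.Finite) :
    coverCount (A ∪ B) x p + coverCount (A ∩ B) x p = coverCount A x p + coverCount B x p :=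
  ncard_union_add_ncard_inter {i | p - x i ∈ A} {i | p - x i ∈ B} hA hB

lemma coverCount_union (hA : {i | p - x i ∈ A}.Finite) (hB : {i | p - x i ∈ B}.Finite)
    (hAB : Disjoint A B) : coverCount (A ∪ B) x p = coverCount A x p + coverCount B x p := by
  rw [← coverCount_union_add_coverCount_inter hA hB, hAB.inter_eq]
  simp [coverCount]

lemma coverCount_coe_finset {W : Finset E} (hW : {i | p - x i ∈ W}.Finite) :
    coverCount (W : Set E) x p = ∑ w ∈ W, coverCount {w} x p := by
  classical
  induction W using Finset.induction_on with
  | empty => simp [coverCount]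
  | insert w W hw ih =>
    have hW' : {i | p - x i ∈ W}.Finite := hW.subset fun _ hi ↦ Finset.mem_insert_of_mem hi
    have hw_fin : {i | p - x i ∈ ({w} : Set E)}.Finite :=
      hW.subset fun _ hi ↦ Finset.mem_insert.2 (Or.inl hi)
    rw [Finset.coe_insert, insert_eq, coverCount_union hw_fin hW' (by simpa using hw), ih hW',
      Finset.sum_insert hw]

end Sub

variable [NormedAddCommGroup E]

lemma locallyFinite_setOf_sub_mem (hx : ∀ R : ℝ, {i | ‖x i‖ ≤ R}.Finite) {A : Set E}
    (hA : IsBounded A) : LocallyFinite fun i ↦ {p | p - x i ∈ A} := by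
  intro p
  obtain ⟨R, hR⟩ := hA.exists_norm_le
  refine ⟨Metric.ball p 1, Metric.ball_mem_nhds p one_pos, (hx (‖p‖ + 1 + R)).subset ?_⟩
  rintro i ⟨q, hq, hqp⟩
  calc ‖x i‖ = ‖p + (q - p) - (q - x i)‖ := by congr 1; abel
    _ ≤ ‖p‖ + ‖q - p‖ + ‖q - x i‖ := (norm_sub_le _ _).trans (by gcongr; exact norm_add_le _ _)
    _ ≤ ‖p‖ + 1 + R := by
      gcongr
      · exact (mem_ball_iff_norm.1 hqp).le
      · exact hR _ hq

lemma eventually_coverCount_eq (hx : ∀ R : ℝ, {i | ‖x i‖ ≤ R}.Finite) {K A B : Set E}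
    (hK : IsCompact K) (hA : A ⊆ K) (hB : B ⊆ K) {α : Type*} {l : Filter α} {d : α → E}
    (hd : Tendsto d l (𝓝 0)) (h : ∀ y ∈ K, ∀ᶠ t in l, y + d t ∈ A ↔ y ∈ B) (p : E) :
    ∀ᶠ t in l, coverCount A x (p + d t) = coverCount B x p := by
  have hlf := locallyFinite_setOf_sub_mem hx hK.isBounded
  have hclosed (i : ι) : IsClosed {q | q - x i ∈ K} :=
    hK.isClosed.preimage (continuous_id.sub continuous_const)
  have hpd : Tendsto (fun t ↦ p + d t) l (𝓝 p) := by simpa using hd.const_add p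
  have hleave := hpd.eventually (hlf.iInter_compl_mem_nhds hclosed p)
  have hnear : ∀ᶠ t in l, ∀ i ∈ {i | p - x i ∈ K}, p - x i + d t ∈ A ↔ p - x i ∈ B :=
    (hlf.point_finite p).eventually_all.2 fun i hi ↦ h _ hi
  filter_upwards [hleave, hnear] with t ht ht'
  refine congrArg ncard (Set.ext fun i ↦ ?_)
  rw [mem_ofPred_eq, mem_ofPred_eq, add_sub_right_comm]
  by_cases hi : p - x i ∈ K
  · exact ht' i hi
  · have : p + d t - x i ∉ K := mem_iInter₂.1 ht i hi
    rw [add_sub_right_comm] at this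
    exact iff_of_false (fun h ↦ this (hA h)) fun h ↦ hi (hB h)

end CoverCount

section Extreme

variable {ι E : Type*} [NormedAddCommGroup E] [NormedSpace ℝ E] [Nontrivial E]

lemma coverCount_interior_add_sum_extremePoints_le {K : Set E} {x : ι → E} {p : E}
    (hfin : {i | p - x i ∈ K}.Finite) {W : Finset E} (hW : (W : Set E) ⊆ K.extremePoints ℝ) :
    coverCount (interior K) x p + ∑ w ∈ W, coverCount {w} x p ≤ coverCount K x p := by
  have hWK : (W : Set E) ⊆ K := hW.trans extremePoints_subset
  have hW_fin : {i | p - x i ∈ W}.Finite := hfin.subset fun _ hi ↦ hWK hi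
  have hint_fin : {i | p - x i ∈ interior K}.Finite :=
    hfin.subset (preimage_mono (f := (p - x ·)) interior_subset)
  rw [← coverCount_coe_finset hW_fin, ← coverCount_union hint_fin hW_fin
    ((disjoint_interior_extremePoints K).mono_right hW)]
  exact coverCount_mono hfin (union_subset interior_subset hWK)

end Extreme

namespace IsKFoldTranslativeTiling

variable {ι : Type} {K : Set (ℝ × ℝ)} {x : ι → ℝ × ℝ} {k : ℕ}

lemma finite_setOf_sub_mem (h : IsKFoldTranslativeTiling K x k) {A : Set (ℝ × ℝ)}
    (hA : IsBounded A) (p : ℝ × ℝ) : {i | p - x i ∈ A}.Finite :=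
  (locallyFinite_setOf_sub_mem h.1 hA).point_finite p

lemma le_coverCount (h : IsKFoldTranslativeTiling K x k) (hK : IsBounded K) (p : ℝ × ℝ) :
    k ≤ coverCount K x p := by
  obtain ⟨s, hks, hs⟩ := h.2.1 p
  calc k ≤ s.card := hks
    _ = (s : Set ι).ncard := (ncard_coe_finset s).symm
    _ ≤ coverCount K x p := ncard_le_ncard hs (h.finite_setOf_sub_mem hK p)

lemma coverCount_interior_le (h : IsKFoldTranslativeTiling K x k) (hK : IsBounded K)
    (p : ℝ × ℝ) : coverCount (interior K) x p ≤ k := by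
  have hfin := h.finite_setOf_sub_mem (hK.subset interior_subset) p
  rw [coverCount, ncard_eq_toFinset_card _ hfin]
  exact h.2.2 p _ fun i hi ↦ hfin.mem_toFinset.1 hi

lemma coverCount_directionalInterior (h : IsKFoldTranslativeTiling K x k) (hK : IsCompact K)
    {u : ℝ × ℝ} (hu : IsStrictlyConvexAlong K u) (p : ℝ × ℝ) :
    coverCount (directionalInterior K u) x p = k := by
  have hd : Tendsto (fun t : ℝ ↦ t • u) (𝓝[>] 0) (𝓝 0) := by
    simpa using tendsto_add_smul_nhdsGT_zero 0 u
  have eventually_eq {A : Set (ℝ × ℝ)} (hKA : interior K ⊆ A) (hAK : A ⊆ K) :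
      ∀ᶠ t in 𝓝[>] (0 : ℝ),
        coverCount A x (p + t • u) = coverCount (directionalInterior K u) x p :=
    eventually_coverCount_eq h.1 hK hAK (directionalInterior_subset hK.isClosed) hd
      (fun _ hy ↦ eventually_add_smul_mem_iff hK.isClosed hu hKA hAK hy) p
  obtain ⟨t, ht_int, ht⟩ := ((eventually_eq Subset.rfl interior_subset).and
    (eventually_eq interior_subset Subset.rfl)).exists
  apply le_antisymm
  · exact ht_int ▸ h.coverCount_interior_le hK.isBounded _
  · exact ht ▸ h.le_coverCount hK.isBounded _

lemma two_mul_add_coverCount_antipodal (h : IsKFoldTranslativeTiling K x k) (hK : IsCompact K)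
    (hconv : Convex ℝ K) (hint : (interior K).Nonempty) {f : StrongDual ℝ (ℝ × ℝ)}
    {w w' : ℝ × ℝ} (hw : IsStrictlyAntipodal f K w w') (p : ℝ × ℝ) :
    2 * k + (coverCount {w} x p + coverCount {w'} x p) =
      coverCount (interior K) x p + coverCount K x p := by
  have hfin {A : Set (ℝ × ℝ)} (hA : A ⊆ K) : {i | p - x i ∈ A}.Finite :=
    h.finite_setOf_sub_mem (hK.isBounded.subset hA) p
  have hf : (f : ℝ × ℝ →ₗ[ℝ] ℝ) ≠ 0 := by exact_mod_cast hw.functional_ne_zero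
  obtain ⟨u, hu, hker⟩ := exists_ker_eq_span_singleton (by simp) hf
  have hconv_u := hw.isStrictlyConvexAlong hconv hint hu hker
  have hpair : {w, w'} ⊆ K := by simp [insert_subset_iff, hw.left_mem, hw.right_mem]
  have two_mul_k : coverCount (K \ {w, w'}) x p + coverCount (interior K) x p = k + k := by
    rw [← hw.directionalInterior_union_neg hK.isClosed hconv hint hu hker,
      ← directionalInterior_inter_neg hK.isClosed hconv_u,
      coverCount_union_add_coverCount_inter (hfin (directionalInterior_subset hK.isClosed))
        (hfin (directionalInterior_subset hK.isClosed)),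
      h.coverCount_directionalInterior hK hconv_u, h.coverCount_directionalInterior hK hconv_u.neg]
  have coverCount_pair :
      coverCount {w, w'} x p = coverCount {w} x p + coverCount {w'} x p := by
    rw [insert_eq, coverCount_union (hfin (singleton_subset_iff.2 hw.left_mem))
      (hfin (singleton_subset_iff.2 hw.right_mem)) (disjoint_singleton.2 hw.ne)]
  have coverCount_eq :
      coverCount K x p = coverCount (K \ {w, w'}) x p + coverCount {w, w'} x p := by
    rw [← coverCount_union (hfin sdiff_subset) (hfin hpair) disjoint_sdiff_left,
      sdiff_union_of_subset hpair]
  omega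

lemma four_mul_coverCount_interior_add_le (h : IsKFoldTranslativeTiling K x k) (hK : IsCompact K)
    (hconv : Convex ℝ K) (hint : (interior K).Nonempty) {c : ℝ × ℝ}
    (hsym : ∀ p ∈ K, 2 • c - p ∈ K) {W : Finset (ℝ × ℝ)} (hW : (W : Set _) = K.exposedPoints ℝ)
    {w₀ : ℝ × ℝ} (hw₀ : w₀ ∈ W) {p : ℝ × ℝ} {κ : ℕ}
    (hκ : κ = coverCount {w₀} x p + coverCount {2 • c - w₀} x p) :
    4 * coverCount (interior K) x p + W.card * κ ≤ 4 * k + 2 * κ := by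
  have mem_W {w : ℝ × ℝ} : w ∈ W ↔ w ∈ K.exposedPoints ℝ := by rw [← hW, Finset.mem_coe]
  have hnontriv : K.Nontrivial := by
    obtain ⟨q, hq⟩ := hint
    exact (infinite_of_mem_nhds q (mem_interior_iff_mem_nhds.1 hq)).nontrivial
  have antipodal (w) (hw : w ∈ W) : ∃ f, IsStrictlyAntipodal f K w (2 • c - w) :=
    exists_isStrictlyAntipodal hnontriv hsym (mem_W.1 hw)
  have reflect_mem (w) (hw : w ∈ W) : 2 • c - w ∈ W := by
    obtain ⟨f, hf⟩ := antipodal w hw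
    exact mem_W.2 hf.right_mem_exposedPoints
  have hcount (w) (hw : w ∈ W) : 2 * k + (coverCount {w} x p + coverCount {2 • c - w} x p) =
      coverCount (interior K) x p + coverCount K x p := by
    obtain ⟨f, hf⟩ := antipodal w hw
    exact h.two_mul_add_coverCount_antipodal hK hconv hint hf p
  have sum_reflect : ∑ w ∈ W, coverCount {2 • c - w} x p = ∑ w ∈ W, coverCount {w} x p :=
    Finset.sum_nbij' (2 • c - ·) (2 • c - ·) reflect_mem reflect_mem
      (fun w _ ↦ sub_sub_cancel _ w) (fun w _ ↦ sub_sub_cancel _ w) (fun _ _ ↦ rfl)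
  have card_mul : W.card * κ = 2 * ∑ w ∈ W, coverCount {w} x p := by
    calc W.card * κ = ∑ w ∈ W, (coverCount {w} x p + coverCount {2 • c - w} x p) := by
          rw [← smul_eq_mul, ← Finset.sum_const]
          refine Finset.sum_congr rfl fun w hw ↦ ?_
          have := hcount w hw
          have := hcount w₀ hw₀
          omega
      _ = 2 * ∑ w ∈ W, coverCount {w} x p := by
          rw [Finset.sum_add_distrib, sum_reflect, two_mul]
  have := coverCount_interior_add_sum_extremePoints_le (h.finite_setOf_sub_mem hK.isBounded p)
    (hW.trans_subset exposedPoints_subset_extremePoints)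
  have := hcount w₀ hw₀
  omega

end IsKFoldTranslativeTiling

namespace IsConvexPolygon

variable {P : Set (ℝ × ℝ)} {V : Finset (ℝ × ℝ)}

lemma convex (hP : IsConvexPolygon P V) : Convex ℝ P := hP.1 ▸ convex_convexHull ℝ _

lemma isCompact (hP : IsConvexPolygon P V) : IsCompact P :=
  hP.1 ▸ V.finite_toSet.isCompact_convexHull (𝕜 := ℝ)

lemma coe_eq_exposedPoints (hP : IsConvexPolygon P V) : (V : Set (ℝ × ℝ)) = P.exposedPoints ℝ := by
  obtain ⟨rfl, hext, -⟩ := hP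
  exact Subset.antisymm
    (fun v hv ↦ extremePoints_convexHull_subset_exposedPoints V.finite_toSet (hext v hv))
    (exposedPoints_subset_extremePoints.trans extremePoints_convexHull_subset)

end IsConvexPolygon

theorem interior_count_upper_bound_general {m : ℕ} {P : Set (ℝ × ℝ)} {V : Finset (ℝ × ℝ)}
    (hP : IsConvexPolygon P V) (hV : V.card = 2 * m) (hsym : IsCentrallySymmetric P)
    {k : ℕ} {ι : Type} {x : ι → ℝ × ℝ} (htile : IsKFoldTranslativeTiling P x k)
    {v : ℝ × ℝ} {j : ι} (hv : v - x j ∈ V) :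
    {i : ι | v - x i ∈ interior P}.ncard + m / 2 ≤ k := by
  obtain ⟨c, hc⟩ := hsym
  set κ := coverCount {v - x j} x v + coverCount {2 • c - (v - x j)} x v with hκ
  have hκ_pos : 0 < κ :=
    Nat.add_pos_left ((ncard_pos (htile.finite_setOf_sub_mem isBounded_singleton v)).2 ⟨j, rfl⟩) _
  have hbound := htile.four_mul_coverCount_interior_add_le hP.isCompact hP.convex hP.2.2 hc
    hP.coe_eq_exposedPoints hv hκ
  obtain ⟨n, rfl⟩ : ∃ n, m = n + 1 := Nat.exists_eq_add_one.2 (by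
    have := Finset.card_pos.2 ⟨_, hv⟩
    omega)
  have hn : n ≤ n * κ := Nat.le_mul_of_pos_right n hκ_pos
  have hmul : V.card * κ = 2 * (n * κ) + 2 * κ := by rw [hV]; ring
  rw [hmul, coverCount] at hbound
  omega

/-- Let `m ≥ 4`, let `P` be a centrally symmetric convex `2m`-gon and let `P + X` be a
`k`-fold translative tiling of the plane. Then for every vertex `v ∈ V + X` the number
of indices `i` with `v ∈ int(P) + x i` is at most `k - ⌈(m-1)/2⌉`; equivalently
`φ(v) ≥ ⌈(m-1)/2⌉`. -/
theorem interior_count_upper_bound (m : ℕ) (hm : 4 ≤ m)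
    (P : Set (ℝ × ℝ)) (V : Finset (ℝ × ℝ))
    (hP : IsConvexPolygon P V) (hV : V.card = 2 * m) (hsym : IsCentrallySymmetric P)
    (k : ℕ) (hk : 0 < k) (ι : Type) (x : ι → ℝ × ℝ)
    (htile : IsKFoldTranslativeTiling P x k)
    (v : ℝ × ℝ) (j : ι) (hv : v - x j ∈ V) :
    {i : ι | v - x i ∈ interior P}.ncard + (m - 1 + 1) / 2 ≤ k := by
  rw [Nat.sub_add_cancel (by omega)]
  exact interior_count_upper_bound_general hP hV hsym htile hv
end

section
/- Let P be a centrally symmetric convex octagon (a convex polygon with exactly 8 vertices, symmetric about a point). If P admits a k-fold translative tiling of the plane for some positive integer k, then k ≥ 5; that is, τ(P) ≥ 5. -/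
open Pointwise

/-!
Look at the tiling near a point `v`. Let `F` be the number of tiles containing `v` in their
interior, and `e i`, `w i` the numbers of tiles having `v` on their `i`-th open edge, respectively
at their `i`-th vertex. Moving `v` slightly in a generic direction gives, for every `j`,
`F + (e j + ⋯ + e (j + 3)) + (w (j + 1) + ⋯ + w (j + 3)) = k`, and these equations are strong:
if `v` is a vertex of some tile, then `F + 2 ≤ k`. Suppose `k ≤ 4`. A vertex of a tile with
`F < k - 2` lies at the end of an edge vector `u` such that `v + u` is a vertex of a tile with
`F ≥ 2`; so there is always a *tight* `v`, one with `F + 2 = k`. The equations at a tight vertex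
force it into the relative interior of some edge `[v - s u, v + (1 - s) u]`, and both endpoints of
that edge are tight again and lie on translates of the opposite edge. Repeating this,
`v - u` and `v + u` are tight too. Among the tiles with a vertex at one of these four new points,
at least three contain `v` in their interior, against `F + 2 = k ≤ 4`.
-/

open Set Filter Topology

section Wedge

/-- The planar cross product `a₁ b₂ - a₂ b₁`, the determinant of the matrix with columns
`a` and `b`. -/
def wedge : (ℝ × ℝ) →ₗ[ℝ] (ℝ × ℝ) →ₗ[ℝ] ℝ :=
  LinearMap.mk₂ ℝ (fun a b => a.1 * b.2 - a.2 * b.1)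
    (fun a b c => by simp only [Prod.fst_add, Prod.snd_add]; ring)
    (fun s a b => by simp only [Prod.smul_fst, Prod.smul_snd, smul_eq_mul]; ring)
    (fun a b c => by simp only [Prod.fst_add, Prod.snd_add]; ring)
    (fun s a b => by simp only [Prod.smul_fst, Prod.smul_snd, smul_eq_mul]; ring)

theorem wedge_apply (a b : ℝ × ℝ) : wedge a b = a.1 * b.2 - a.2 * b.1 := rfl

@[simp]
theorem wedge_self (a : ℝ × ℝ) : wedge a a = 0 := by
  rw [wedge_apply]; ring

theorem neg_wedge (a b : ℝ × ℝ) : -wedge a b = wedge b a := by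
  simp only [wedge_apply]; ring

theorem exists_eq_smul_of_wedge_eq_zero {a b : ℝ × ℝ} (ha : a ≠ 0) (h : wedge a b = 0) :
    ∃ t : ℝ, b = t • a := by
  have hnorm : 0 < a.1 ^ 2 + a.2 ^ 2 := by
    rcases not_and_or.1 (mt Prod.ext_iff.2 ha) with h1 | h2
    · have := pow_pos (abs_pos.2 h1) 2
      rw [sq_abs] at this
      positivity
    · have := pow_pos (abs_pos.2 h2) 2
      rw [sq_abs] at this
      positivity
  rw [wedge_apply] at h
  refine ⟨(a.1 * b.1 + a.2 * b.2) / (a.1 ^ 2 + a.2 ^ 2), ?_⟩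
  ext <;> simp only [Prod.smul_fst, Prod.smul_snd, smul_eq_mul] <;> field_simp
  · linear_combination -a.2 * h
  · linear_combination a.1 * h

/-- Twice the signed area of the triangle `a b c`; it is positive when `a`, `b`, `c` make a
left turn. -/
def orient (a b c : ℝ × ℝ) : ℝ := wedge (b - a) (c - a)

theorem orient_apply (a b c : ℝ × ℝ) :
    orient a b c = (b.1 - a.1) * (c.2 - a.2) - (b.2 - a.2) * (c.1 - a.1) := rfl

theorem orient_rotate (a b c : ℝ × ℝ) : orient b c a = orient a b c := by
  simp only [orient_apply]; ring

@[simp]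
theorem orient_self_left (a b : ℝ × ℝ) : orient a b a = 0 := by
  simp [orient]

@[simp]
theorem orient_self_right (a b : ℝ × ℝ) : orient a b b = 0 :=
  wedge_self _

theorem neg_orient (a b c : ℝ × ℝ) : -orient a b c = orient b a c := by
  simp only [orient_apply]; ring

theorem orient_add_orient_add_orient (a b c d : ℝ × ℝ) :
    orient d a b + orient d b c + orient d c a = orient a b c := by
  simp only [orient_apply]; ring

theorem orient_add (a b c u : ℝ × ℝ) : orient a b (c + u) = orient a b c + wedge (b - a) u := by
  simp only [orient_apply, wedge_apply, Prod.fst_add, Prod.snd_add, Prod.fst_sub, Prod.snd_sub]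
  ring

theorem orient_combo (a b c d : ℝ × ℝ) {r s : ℝ} (hrs : r + s = 1) :
    orient a b (r • c + s • d) = r * orient a b c + s * orient a b d := by
  obtain rfl : s = 1 - r := by linarith
  simp only [orient_apply, Prod.fst_add, Prod.snd_add, Prod.smul_fst, Prod.smul_snd, smul_eq_mul]
  ring

theorem convex_setOf_orient_nonneg (a b : ℝ × ℝ) : Convex ℝ {z | 0 ≤ orient a b z} := by
  intro y hy z hz r s hr hs hrs
  rw [mem_ofPred_eq, orient_combo a b y z hrs]
  exact add_nonneg (mul_nonneg hr hy) (mul_nonneg hs hz)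

theorem orient_pos_of_mem_openSegment {a b c d z : ℝ × ℝ} (hz : z ∈ openSegment ℝ c d)
    (hc : 0 ≤ orient a b c) (hd : 0 ≤ orient a b d) (hcd : 0 < orient a b c + orient a b d) :
    0 < orient a b z := by
  obtain ⟨r, s, hr, hs, hrs, rfl⟩ := hz
  rw [orient_combo a b c d hrs]
  rcases hc.eq_or_lt with hc0 | hc0
  · have : 0 < orient a b d := by linarith
    positivity
  · positivity

theorem orient_smul_eq (a b c z : ℝ × ℝ) :
    orient a b c • z = orient b c z • a + orient c a z • b + orient a b z • c := by
  ext <;> simp only [orient_apply, Prod.smul_fst, Prod.smul_snd, Prod.fst_add, Prod.snd_add,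
    smul_eq_mul] <;> ring

theorem mem_of_convex_of_orient_nonneg {S : Set (ℝ × ℝ)} (hS : Convex ℝ S) {a b c z : ℝ × ℝ}
    (ha : a ∈ S) (hb : b ∈ S) (hc : c ∈ S) (habc : 0 < orient a b c) (hab : 0 ≤ orient a b z)
    (hbc : 0 ≤ orient b c z) (hca : 0 ≤ orient c a z) : z ∈ S := by
  have hsum : orient b c z + orient c a z + orient a b z = orient a b c := by
    simp only [orient_apply]; ring
  have hz : Finset.univ.centerMass ![orient b c z, orient c a z, orient a b z] ![a, b, c] = z := by
    simp only [Finset.centerMass, Fin.sum_univ_three, Matrix.cons_val, hsum, ← orient_smul_eq,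
      inv_smul_smul₀ habc.ne']
  rw [← hz]
  refine hS.centerMass_mem ?_ ?_ ?_
  · simp [Fin.forall_fin_succ, hab, hbc, hca]
  · simpa [Fin.sum_univ_three, hsum] using habc
  · simp [Fin.forall_fin_succ, ha, hb, hc]

@[fun_prop]
theorem continuous_orient (a b : ℝ × ℝ) : Continuous (orient a b) := by
  simp only [funext (orient_apply a b)]
  fun_prop

end Wedge

section TileCount

variable {ι : Type} {x : ι → ℝ × ℝ} {A B : Set (ℝ × ℝ)} {v : ℝ × ℝ}

/-- The number of indices `t` for which `v` lies in the translate `A + x t`. It has the junk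
value `0` when there are infinitely many. -/
noncomputable def tileCount (x : ι → ℝ × ℝ) (A : Set (ℝ × ℝ)) (v : ℝ × ℝ) : ℕ :=
  {t | v - x t ∈ A}.ncard

theorem tileCount_pos_iff (hA : {t | v - x t ∈ A}.Finite) :
    0 < tileCount x A v ↔ ∃ t, v - x t ∈ A :=
  ncard_pos hA

theorem tileCount_mono (hAB : A ⊆ B) (hB : {t | v - x t ∈ B}.Finite) :
    tileCount x A v ≤ tileCount x B v :=
  ncard_le_ncard (fun _ ht => hAB ht) hB

theorem tileCount_union_le (x : ι → ℝ × ℝ) (A B : Set (ℝ × ℝ)) (v : ℝ × ℝ) :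
    tileCount x (A ∪ B) v ≤ tileCount x A v + tileCount x B v :=
  ncard_union_le _ _

theorem tileCount_union (hAB : Disjoint A B) (hA : {t | v - x t ∈ A}.Finite)
    (hB : {t | v - x t ∈ B}.Finite) :
    tileCount x (A ∪ B) v = tileCount x A v + tileCount x B v :=
  ncard_union_eq (hAB.preimage fun t => v - x t) hA hB

theorem tileCount_biUnion {κ : Type*} (s : Finset κ) (A : κ → Set (ℝ × ℝ))
    (hdisj : (s : Set κ).PairwiseDisjoint A) (hfin : ∀ i ∈ s, {t | v - x t ∈ A i}.Finite) :
    tileCount x (⋃ i ∈ s, A i) v = ∑ i ∈ s, tileCount x (A i) v := by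
  have hpre : {t | v - x t ∈ ⋃ i ∈ s, A i} = ⋃ i ∈ s, {t | v - x t ∈ A i} := by
    ext; simp
  rw [tileCount, hpre, ← finsum_mem_coe_finset]
  exact s.finite_toSet.ncard_biUnion hfin fun i hi j hj hij =>
    (hdisj hi hj hij).preimage fun t => v - x t

theorem tileCount_preimage_add (x : ι → ℝ × ℝ) (A : Set (ℝ × ℝ)) (u v : ℝ × ℝ) :
    tileCount x ((· + u) ⁻¹' A) v = tileCount x A (v + u) := by
  simp only [tileCount, mem_preimage, sub_add_eq_add_sub]

end TileCount

namespace IsKFoldTranslativeTiling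

variable {ι : Type} {K : Set (ℝ × ℝ)} {x : ι → ℝ × ℝ} {k : ℕ}

theorem finite_tiles (h : IsKFoldTranslativeTiling K x k) {A : Set (ℝ × ℝ)}
    (hA : Bornology.IsBounded A) (v : ℝ × ℝ) : {t | v - x t ∈ A}.Finite := by
  obtain ⟨R, hR⟩ := hA.exists_norm_le
  refine (h.1 (‖v‖ + R)).subset fun t ht => ?_
  calc ‖x t‖ = ‖v - (v - x t)‖ := by rw [sub_sub_cancel]
    _ ≤ ‖v‖ + R := (norm_sub_le _ _).trans (by gcongr; exact hR _ ht)

theorem le_tileCount (h : IsKFoldTranslativeTiling K x k) (hK : Bornology.IsBounded K)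
    (v : ℝ × ℝ) : k ≤ tileCount x K v := by
  obtain ⟨s, hs, hsK⟩ := h.2.1 v
  rw [← ncard_coe_finset] at hs
  exact hs.trans (ncard_le_ncard hsK (h.finite_tiles hK v))

theorem tileCount_interior_le (h : IsKFoldTranslativeTiling K x k) (v : ℝ × ℝ) :
    tileCount x (interior K) v ≤ k := by
  by_contra! hlt
  obtain ⟨s, hs, hcard⟩ := exists_subset_card_eq (Nat.succ_le_of_lt hlt)
  have hfin : s.Finite := finite_of_ncard_pos (by omega)
  have := h.2.2 v hfin.toFinset fun t ht => hs (hfin.mem_toFinset.1 ht)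
  rw [← ncard_eq_toFinset_card s hfin] at this
  omega

theorem tileCount_eq (h : IsKFoldTranslativeTiling K x k) (hK : Bornology.IsBounded K)
    {D : Set (ℝ × ℝ)} (hD : D ⊆ K) (u : ℝ × ℝ)
    (henter : ∀ y ∈ D, ∀ᶠ ε : ℝ in 𝓝[>] 0, y + ε • u ∈ interior K)
    (hexit : ∀ y ∉ D, ∀ᶠ ε : ℝ in 𝓝[>] 0, y + ε • u ∉ K) (v : ℝ × ℝ) :
    tileCount x D v = k := by
  obtain ⟨R, hR⟩ := hK.exists_norm_le
  have hnear : ∀ t w, ‖w‖ ≤ ‖u‖ → v - x t + w ∈ K → ‖x t‖ ≤ ‖v‖ + ‖u‖ + R := fun t w hw ht =>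
    calc ‖x t‖ = ‖v + w - (v - x t + w)‖ := by congr 1; abel
      _ ≤ ‖v‖ + ‖w‖ + ‖v - x t + w‖ := (norm_sub_le _ _).trans (by gcongr; exact norm_add_le _ _)
      _ ≤ ‖v‖ + ‖u‖ + R := by gcongr; exact hR _ ht
  have hgerm : ∀ᶠ ε : ℝ in 𝓝[>] 0, ∀ t ∈ {t | ‖x t‖ ≤ ‖v‖ + ‖u‖ + R},
      (v - x t ∈ D → v - x t + ε • u ∈ interior K) ∧ (v - x t ∉ D → v - x t + ε • u ∉ K) := by
    refine (eventually_all_finite (h.1 _)).2 fun t _ => ?_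
    by_cases ht : v - x t ∈ D
    · exact (henter _ ht).mono fun ε hε => ⟨fun _ => hε, fun hn => absurd ht hn⟩
    · exact (hexit _ ht).mono fun ε hε => ⟨fun hy => absurd hy ht, fun _ => hε⟩
  obtain ⟨ε, hε, hε0, hε1⟩ := (hgerm.and (Ioo_mem_nhdsGT one_pos)).exists
  have hεu : ‖ε • u‖ ≤ ‖u‖ := by
    rw [norm_smul, Real.norm_of_nonneg hε0.le]
    exact mul_le_of_le_one_left (norm_nonneg u) hε1.le
  apply le_antisymm
  · refine le_trans ?_ (h.tileCount_interior_le (v + ε • u))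
    refine ncard_le_ncard (fun t (ht : v - x t ∈ D) => ?_)
      (h.finite_tiles (hK.subset interior_subset) _)
    have htK : v - x t + 0 ∈ K := by rw [add_zero]; exact hD ht
    have := (hε t (hnear t 0 (by simp) htK)).1 ht
    rwa [sub_add_eq_add_sub] at this
  · refine (h.le_tileCount hK (v + ε • u)).trans ?_
    refine ncard_le_ncard (fun t (ht : v + ε • u - x t ∈ K) => ?_)
      (h.finite_tiles (hK.subset hD) _)
    rw [← sub_add_eq_add_sub] at ht
    by_contra hn
    exact (hε t (hnear t _ hεu ht)).2 hn ht

end IsKFoldTranslativeTiling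

/-- A strictly convex centrally symmetric `2n`-gon, given by its vertices in counterclockwise
order. Vertices are indexed by `ℤ`, with period `2n`, so that no index arithmetic wraps around. -/
structure SymmetricPolygon (n : ℕ) where
  /-- The centre of symmetry. -/
  center : ℝ × ℝ
  /-- The vertices. -/
  vertex : ℤ → ℝ × ℝ
  two_le : 2 ≤ n
  vertex_add : ∀ i, vertex (i + n) = 2 • center - vertex i
  orient_pos : ∀ i j k : ℤ, i < j → j < k → k < i + 2 * n →
    0 < orient (vertex i) (vertex j) (vertex k)

namespace SymmetricPolygon

variable {n : ℕ} (O : SymmetricPolygon n)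

/-- The edge vector from the `i`-th vertex to the next one. -/
def edge (i : ℤ) : ℝ × ℝ := O.vertex (i + 1) - O.vertex i

/-- A linear height of `y` above the line through the `l`-th edge, positive on the side of the
polygon; it is the distance to that line scaled by the length of the edge. -/
def height (l : ℤ) (y : ℝ × ℝ) : ℝ := orient (O.vertex l) (O.vertex (l + 1)) y

/-- The closed polygonal region, as an intersection of half-planes. -/
def region : Set (ℝ × ℝ) := {y | ∀ l, 0 ≤ O.height l y}

/-- The open polygonal region, as an intersection of open half-planes. -/
def inside : Set (ℝ × ℝ) := {y | ∀ l, 0 < O.height l y}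

/-- The `i`-th edge without its endpoints. -/
def openEdge (i : ℤ) : Set (ℝ × ℝ) := openSegment ℝ (O.vertex i) (O.vertex (i + 1))

theorem vertex_add_edge (i : ℤ) : O.vertex i + O.edge i = O.vertex (i + 1) :=
  add_sub_cancel _ _

theorem vertex_periodic : Function.Periodic O.vertex (2 * n) := fun i => by
  rw [two_mul, ← add_assoc, O.vertex_add, O.vertex_add, sub_sub_cancel]

theorem edge_antiperiodic : Function.Antiperiodic O.edge n := fun i => by
  rw [edge, edge, show i + n + 1 = i + 1 + n by ring, O.vertex_add, O.vertex_add]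
  abel

theorem edge_periodic : Function.Periodic O.edge (2 * n) :=
  O.edge_antiperiodic.periodic_two_mul

theorem height_periodic : Function.Periodic O.height (2 * n) := fun l => by
  funext y
  rw [height, height, add_right_comm, O.vertex_periodic, O.vertex_periodic]

theorem openEdge_periodic : Function.Periodic O.openEdge (2 * n) := fun l => by
  rw [openEdge, openEdge, add_right_comm, O.vertex_periodic, O.vertex_periodic]

theorem exists_mem_Ico (l a : ℤ) :
    ∃ m ∈ Ico a (a + 2 * n), O.height l = O.height m ∧ O.edge l = O.edge m := by
  have hper : Function.Periodic (fun l => (O.height l, O.edge l)) (2 * n : ℤ) := fun l =>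
    Prod.ext (O.height_periodic l) (O.edge_periodic l)
  have hn := O.two_le
  obtain ⟨m, hm, h⟩ := hper.exists_mem_Ico (by omega) l a
  exact ⟨m, hm, Prod.ext_iff.1 h⟩

theorem height_add (l : ℤ) (y u : ℝ × ℝ) :
    O.height l (y + u) = O.height l y + wedge (O.edge l) u :=
  orient_add _ _ _ _

theorem height_add_height_opposite (l : ℤ) (y : ℝ × ℝ) :
    O.height l y + O.height (l + n) y = O.height l (O.vertex (l + n)) := by
  have h : O.height (l + n) y = -wedge (O.edge l) (y - O.vertex (l + n)) := by
    rw [← LinearMap.neg_apply, ← map_neg, ← O.edge_antiperiodic]; rfl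
  have := O.height_add l y (O.vertex (l + n) - y)
  rw [add_sub_cancel] at this
  rw [this, h, ← neg_sub y, map_neg]

theorem height_vertex_self (l : ℤ) : O.height l (O.vertex l) = 0 := orient_self_left _ _

theorem height_vertex_succ (l : ℤ) : O.height l (O.vertex (l + 1)) = 0 := orient_self_right _ _

theorem height_pred_vertex (l : ℤ) : O.height (l - 1) (O.vertex l) = 0 := by
  simpa using O.height_vertex_succ (l - 1)

theorem height_vertex_pos {l i : ℤ} (h1 : l + 1 < i) (h2 : i < l + 2 * n) :
    0 < O.height l (O.vertex i) :=
  O.orient_pos l (l + 1) i (by omega) h1 h2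

theorem height_vertex_pos' {l i : ℤ} (h1 : i < l) (h2 : l + 1 < i + 2 * n) :
    0 < O.height l (O.vertex i) := by
  rw [← O.vertex_periodic]
  exact O.height_vertex_pos h2 (by omega)

theorem vertex_mem_region (i : ℤ) : O.vertex i ∈ O.region := fun l => by
  obtain ⟨m, ⟨h1, h2⟩, h, -⟩ := O.exists_mem_Ico l i
  rw [h]
  rcases h1.eq_or_lt with rfl | h1
  · rw [height_vertex_self]
  rcases (Int.add_one_le_of_lt h2).eq_or_lt with h2 | h2
  · rw [← O.vertex_periodic, ← h2, height_vertex_succ]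
  · exact (O.height_vertex_pos' h1 h2).le

theorem height_vertex_nonneg (l i : ℤ) : 0 ≤ O.height l (O.vertex i) := O.vertex_mem_region i l

end SymmetricPolygon

theorem exists_nonneg_nonpos_succ_of_antiperiodic {α : Type*} [AddCommGroup α] [LinearOrder α]
    [IsOrderedAddMonoid α] {f : ℤ → α} {n : ℕ} (hf : Function.Antiperiodic f n) :
    ∃ i, 0 ≤ f i ∧ f (i + 1) ≤ 0 := by
  obtain ⟨a, ha⟩ : ∃ a, 0 ≤ f a := by
    rcases le_total 0 (f 0) with h | h
    · exact ⟨0, h⟩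
    · exact ⟨0 + n, by rw [hf]; exact neg_nonneg.2 h⟩
  by_contra! hpos
  have hall : ∀ m : ℕ, 0 < f (a + 1 + m) := by
    intro m
    induction m with
    | zero => simpa using hpos a ha
    | succ m ih => simpa [add_assoc] using hpos _ ih.le
  have h0 := hall 0
  have hneg := hall n
  rw [hf, neg_pos] at hneg
  exact hneg.not_ge (by simpa using h0.le)

namespace SymmetricPolygon

variable {n : ℕ} (O : SymmetricPolygon n) {y : ℝ × ℝ} {i j l : ℤ}

-- Affine coordinates in the parallelogram on two opposite edges, to which `O.height l` is applied.
theorem height_mul_height (i l : ℤ) (y : ℝ × ℝ) :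
    O.height i (O.vertex (i + n)) * O.height l y =
      O.height (i + n) y * O.height l (O.vertex (i + 1)) +
        O.height i y * O.height l (O.vertex (i + n)) -
      orient (O.vertex (i + n)) y (O.vertex (i + 1)) * wedge (O.edge l) (O.edge i) := by
  rw [eq_sub_of_add_eq' (O.height_add_height_opposite i y), ← O.vertex_add_edge i]
  simp only [height, ← O.vertex_add_edge i, ← O.vertex_add_edge l, orient_apply, wedge_apply,
    Prod.fst_add, Prod.snd_add]
  ring

theorem wedge_edge_succ_pos (i : ℤ) : 0 < wedge (O.edge i) (O.edge (i + 1)) := by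
  have hn := O.two_le
  have h := O.height_vertex_pos (l := i) (i := i + 1 + 1) (by omega) (by omega)
  rwa [← O.vertex_add_edge (i + 1), height_add, height_vertex_succ, zero_add] at h

theorem wedge_edge_pos (hij : i < j) (hj : j < i + n) : 0 < wedge (O.edge i) (O.edge j) := by
  rcases (Int.add_one_le_of_lt hij).eq_or_lt with rfl | hij'
  · exact O.wedge_edge_succ_pos i
  have hcomb := O.height_mul_height i j (O.vertex j)
  rw [height_vertex_self, mul_zero, ← neg_orient, orient_rotate, ← neg_wedge] at hcomb
  have h1 : 0 < O.height (i + n) (O.vertex j) := O.height_vertex_pos' hj (by omega)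
  have h2 : 0 < O.height i (O.vertex j) := O.height_vertex_pos hij' (by omega)
  have h3 : 0 < O.height j (O.vertex (i + 1)) := O.height_vertex_pos' hij' (by omega)
  have h4 : 0 ≤ O.height j (O.vertex (i + n)) := O.height_vertex_nonneg _ _
  have h5 : 0 < orient (O.vertex (i + 1)) (O.vertex j) (O.vertex (i + n)) :=
    O.orient_pos _ _ _ hij' hj (by omega)
  refine pos_of_mul_pos_right (a := orient (O.vertex (i + 1)) (O.vertex j) (O.vertex (i + n)))
    ?_ h5.le
  nlinarith [mul_pos h1 h3, mul_nonneg h2.le h4]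

theorem mem_segment_of_height_eq_zero (hy : y ∈ O.region) (h : O.height l y = 0) :
    y ∈ segment ℝ (O.vertex l) (O.vertex (l + 1)) := by
  have hD' := O.wedge_edge_succ_pos l
  have hD := O.wedge_edge_succ_pos (l - 1)
  rw [sub_add_cancel] at hD
  have he : O.edge l ≠ 0 := fun he => by simp [he] at hD'
  obtain ⟨t, ht⟩ := exists_eq_smul_of_wedge_eq_zero he h
  rw [sub_eq_iff_eq_add'] at ht
  have h0 : O.height (l - 1) y = t * wedge (O.edge (l - 1)) (O.edge l) := by
    rw [ht, height_add, height_pred_vertex, map_smul, zero_add, smul_eq_mul]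
  have h1 : O.height (l + 1) y = (1 - t) * wedge (O.edge l) (O.edge (l + 1)) := by
    have hy' : y = O.vertex (l + 1) + (t - 1) • O.edge l := by
      rw [ht, ← O.vertex_add_edge l]
      module
    rw [hy', height_add, height_vertex_self, map_smul, ← neg_wedge, smul_eq_mul]
    ring
  have ht0 : 0 ≤ t := nonneg_of_mul_nonneg_left (h0 ▸ hy (l - 1)) hD
  have ht1 : 0 ≤ 1 - t := nonneg_of_mul_nonneg_left (h1 ▸ hy (l + 1)) hD'
  rw [segment_eq_image']
  exact ⟨t, ⟨ht0, by linarith⟩, ht.symm⟩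

theorem height_pos_of_orient_pos (hy : y ∈ O.region)
    (ho : 0 < orient (O.vertex (i + n + 1)) y (O.vertex i)) (hl : l = i ∨ l = i + n) :
    0 < O.height l y := by
  have hn := O.two_le
  refine (hy l).lt_of_ne fun h0 => ?_
  have hseg := O.mem_segment_of_height_eq_zero hy h0.symm
  have hside : y ∈ {z | 0 ≤ orient (O.vertex (i + n + 1)) (O.vertex i) z} := by
    refine (convex_setOf_orient_nonneg _ _).segment_subset ?_ ?_ hseg
    · rcases hl with rfl | rfl
      · exact (orient_self_right _ _).ge
      · rw [mem_ofPred_eq, orient_rotate, ← O.vertex_periodic i]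
        exact (O.orient_pos _ _ _ (by omega) (by omega) (by omega)).le
    · rcases hl with rfl | rfl
      · rw [mem_ofPred_eq, ← orient_rotate]
        exact (O.orient_pos _ _ _ (by omega) (by omega) (by omega)).le
      · exact (orient_self_left _ _).ge
  rw [mem_ofPred_eq, ← neg_orient, ← orient_rotate] at hside
  linarith

theorem add_edge_mem_inside (hy : y ∈ O.region)
    (ho : 0 < orient (O.vertex (i + n + 1)) y (O.vertex i)) : y + O.edge i ∈ O.inside := by
  intro l
  obtain ⟨m, ⟨h1, h2⟩, hl, -⟩ := O.exists_mem_Ico l i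
  rw [hl]
  by_cases hm : m = i ∨ m = i + n
  · have hzero : wedge (O.edge m) (O.edge i) = 0 := by
      rcases hm with rfl | rfl <;> simp [O.edge_antiperiodic _]
    rw [height_add, hzero, add_zero]
    exact O.height_pos_of_orient_pos hy ho hm
  rcases lt_or_ge m (i + n) with hmn | hmn
  · have hneg : 0 < wedge (O.edge i) (O.edge m) := O.wedge_edge_pos (by omega) hmn
    have htrans : orient (O.vertex (i + n)) (y + O.edge i) (O.vertex (i + 1)) =
        orient (O.vertex (i + n + 1)) y (O.vertex i) := by
      rw [← O.vertex_add_edge (i + n), O.edge_antiperiodic, ← O.vertex_add_edge i]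
      simp only [orient_apply, Prod.fst_add, Prod.snd_add, Prod.fst_neg, Prod.snd_neg]
      ring
    have hcomb := O.height_mul_height i m (y + O.edge i)
    rw [htrans, ← neg_wedge, O.height_add i, O.height_add (i + n), O.edge_antiperiodic, map_neg,
      LinearMap.neg_apply, wedge_self, neg_zero, add_zero, add_zero] at hcomb
    refine pos_of_mul_pos_right (a := O.height i (O.vertex (i + n))) ?_
      (O.height_vertex_nonneg _ _)
    nlinarith [mul_pos ho hneg, mul_nonneg (hy (i + n)) (O.height_vertex_nonneg m (i + 1)),
      mul_nonneg (hy i) (O.height_vertex_nonneg m (i + n))]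
  · have hpos : 0 < wedge (O.edge m) (O.edge (i + 2 * n)) :=
      O.wedge_edge_pos h2 (by omega)
    rw [O.edge_periodic] at hpos
    rw [height_add]
    exact add_pos_of_nonneg_of_pos (hy m) hpos

theorem add_smul_mem_inside {u : ℝ × ℝ} (hy : y ∈ O.region) (hu : y + u ∈ O.inside) {s : ℝ}
    (hs0 : 0 < s) (hs1 : s ≤ 1) : y + s • u ∈ O.inside := fun l => by
  have h0 := hy l
  have h1 := hu l
  rw [height_add] at h1
  rw [height_add, map_smul, smul_eq_mul]
  nlinarith

theorem orient_center_pos (i : ℤ) : 0 < orient O.center (O.vertex i) (O.vertex (i + 1)) := by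
  have hn := O.two_le
  have h := O.height_vertex_pos (l := i) (i := i + n) (by omega) (by omega)
  rw [O.vertex_add, height, two_nsmul] at h
  have : orient (O.vertex i) (O.vertex (i + 1)) (O.center + O.center - O.vertex i) =
      2 * orient O.center (O.vertex i) (O.vertex (i + 1)) := by
    simp only [orient_apply, Prod.fst_sub, Prod.snd_sub, Prod.fst_add, Prod.snd_add]
    ring
  linarith

theorem center_mem_convexHull : O.center ∈ convexHull ℝ (range O.vertex) := by
  have hmid : O.center = midpoint ℝ (O.vertex 0) (O.vertex (0 + n)) := by
    rw [O.vertex_add, two_nsmul, midpoint_eq_smul_add, add_sub_cancel, ← two_smul ℝ, smul_smul]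
    simp
  rw [hmid]
  exact (convex_convexHull ℝ _).midpoint_mem (subset_convexHull ℝ _ ⟨0, rfl⟩)
    (subset_convexHull ℝ _ ⟨_, rfl⟩)

theorem convex_region : Convex ℝ O.region := by
  rw [region, ofPred_forall]
  exact convex_iInter fun l => convex_setOf_orient_nonneg _ _

-- The ray from the centre through `y` leaves the polygon through some edge, so `y` lies in the
-- triangle spanned by the centre and that edge.
theorem region_eq_convexHull : O.region = convexHull ℝ (range O.vertex) := by
  refine Subset.antisymm (fun y hy => ?_)
    (convexHull_min (range_subset_iff.2 O.vertex_mem_region) O.convex_region)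
  have hanti : Function.Antiperiodic (fun i => orient O.center (O.vertex i) y) n := fun i => by
    simp only [O.vertex_add, two_nsmul, orient_apply, Prod.fst_sub, Prod.snd_sub, Prod.fst_add,
      Prod.snd_add]
    ring
  obtain ⟨i, hi, hi'⟩ := exists_nonneg_nonpos_succ_of_antiperiodic hanti
  refine mem_of_convex_of_orient_nonneg (convex_convexHull ℝ _) O.center_mem_convexHull
    (subset_convexHull ℝ _ ⟨i, rfl⟩) (subset_convexHull ℝ _ ⟨i + 1, rfl⟩)
    (O.orient_center_pos i) hi (hy i) ?_
  rw [← neg_orient]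
  exact neg_nonneg.2 hi'

theorem finite_range_vertex : (range O.vertex).Finite := by
  refine ((finite_Ico (0 : ℤ) (0 + 2 * n)).image O.vertex).subset ?_
  rintro _ ⟨l, rfl⟩
  have hn := O.two_le
  obtain ⟨m, hm, h⟩ := O.vertex_periodic.exists_mem_Ico (by omega) l 0
  exact ⟨m, hm, h.symm⟩

theorem isBounded_region : Bornology.IsBounded O.region := by
  rw [O.region_eq_convexHull]
  exact isBounded_convexHull.2 O.finite_range_vertex.isBounded

theorem isOpen_inside : IsOpen O.inside := by
  have hfin : O.inside = ⋂ l ∈ Ico (0 : ℤ) (0 + 2 * n), O.height l ⁻¹' Ioi 0 := by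
    ext y
    refine ⟨fun hy => mem_iInter₂.2 fun l _ => hy l, fun hy l => ?_⟩
    obtain ⟨m, hm, h, -⟩ := O.exists_mem_Ico l 0
    exact h ▸ mem_iInter₂.1 hy m hm
  rw [hfin]
  exact (finite_Ico _ _).isOpen_biInter fun l _ => isOpen_Ioi.preimage (continuous_orient _ _)

theorem inside_subset_interior_region : O.inside ⊆ interior O.region :=
  interior_maximal (fun _ hy l => (hy l).le) O.isOpen_inside

end SymmetricPolygon

theorem eventually_pos_add_mul {a b : ℝ} (h : 0 < a ∨ a = 0 ∧ 0 < b) :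
    ∀ᶠ ε : ℝ in 𝓝[>] 0, 0 < a + ε * b := by
  rcases h with ha | ⟨rfl, hb⟩
  · have hcont : Continuous fun ε : ℝ => a + ε * b := by fun_prop
    exact nhdsWithin_le_nhds (hcont.continuousAt.eventually_const_lt (by simpa using ha))
  · filter_upwards [self_mem_nhdsWithin] with ε (hε : 0 < ε)
    positivity

namespace SymmetricPolygon

variable {n : ℕ} (O : SymmetricPolygon n) {y : ℝ × ℝ} {i j l : ℤ}

theorem height_eq_zero_of_mem_segment (hy : y ∈ segment ℝ (O.vertex i) (O.vertex (i + 1))) :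
    O.height i y = 0 := by
  obtain ⟨r, s, -, -, hrs, rfl⟩ := hy
  rw [height, orient_combo _ _ _ _ hrs]
  simp

theorem height_eq_zero_of_mem_openEdge (hy : y ∈ O.openEdge i) : O.height i y = 0 :=
  O.height_eq_zero_of_mem_segment (openSegment_subset_segment _ _ _ hy)

theorem height_pos_of_mem_openEdge (hy : y ∈ O.openEdge i) (h1 : i < l) (h2 : l < i + 2 * n) :
    0 < O.height l y := by
  have hn := O.two_le
  refine orient_pos_of_mem_openSegment hy (O.height_vertex_nonneg l i)
    (O.height_vertex_nonneg l (i + 1)) ?_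
  rcases (Int.add_one_le_of_lt h2).eq_or_lt with h2 | h2
  · exact add_pos_of_nonneg_of_pos (O.height_vertex_nonneg l i)
      (O.height_vertex_pos' (l := l) (by omega) (by omega))
  · exact add_pos_of_pos_of_nonneg (O.height_vertex_pos' h1 h2) (O.height_vertex_nonneg l _)

theorem openEdge_subset_region (i : ℤ) : O.openEdge i ⊆ O.region :=
  O.convex_region.openSegment_subset (O.vertex_mem_region _) (O.vertex_mem_region _)

/-- A direction pointing from the `i`-th edge into the polygon exactly when `j ≤ i < j + n`, up to
the period `2n`. -/
def entryDirection (j : ℤ) : ℝ × ℝ := O.edge (j + n - 1) + O.edge (j + n)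

theorem wedge_entryDirection_pos (h1 : j ≤ l) (h2 : l < j + n) :
    0 < wedge (O.edge l) (O.entryDirection j) := by
  have hn := O.two_le
  rw [entryDirection, map_add]
  rcases h1.eq_or_lt with rfl | h1
  · rw [O.edge_antiperiodic, map_neg, wedge_self, neg_zero, add_zero]
    exact O.wedge_edge_pos (by omega) (by omega)
  · refine add_pos_of_nonneg_of_pos ?_ (O.wedge_edge_pos h2 (by omega))
    rcases (Int.le_sub_one_of_lt h2).eq_or_lt with rfl | h2
    · rw [wedge_self]
    · exact (O.wedge_edge_pos h2 (by omega)).le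

theorem wedge_entryDirection_neg (h1 : j + n ≤ l) (h2 : l < j + 2 * n) :
    wedge (O.edge l) (O.entryDirection j) < 0 := by
  have h := O.wedge_entryDirection_pos (j := j) (l := l - n) (by omega) (by omega)
  rw [← sub_add_cancel l n, O.edge_antiperiodic, map_neg, LinearMap.neg_apply]
  exact neg_neg_of_pos h

theorem wedge_entryDirection_ne_zero (l j : ℤ) : wedge (O.edge l) (O.entryDirection j) ≠ 0 := by
  obtain ⟨m, ⟨h1, h2⟩, -, h⟩ := O.exists_mem_Ico l j
  rw [h]
  rcases lt_or_ge m (j + n) with hm | hm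
  · exact (O.wedge_entryDirection_pos h1 hm).ne'
  · exact (O.wedge_entryDirection_neg hm h2).ne

/-- The points from which a small move in the direction `O.entryDirection j` enters the interior
of the polygon. -/
def entrySet (j : ℤ) : Set (ℝ × ℝ) :=
  {y ∈ O.region | ∀ l, O.height l y = 0 → 0 < wedge (O.edge l) (O.entryDirection j)}

theorem height_add_smul (l : ℤ) (y u : ℝ × ℝ) (ε : ℝ) :
    O.height l (y + ε • u) = O.height l y + ε * wedge (O.edge l) u := by
  rw [height_add, map_smul, smul_eq_mul]

theorem eventually_mem_interior_of_mem_entrySet (hy : y ∈ O.entrySet j) :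
    ∀ᶠ ε : ℝ in 𝓝[>] 0, y + ε • O.entryDirection j ∈ interior O.region := by
  have hpos : ∀ l, ∀ᶠ ε : ℝ in 𝓝[>] 0, 0 < O.height l (y + ε • O.entryDirection j) := fun l => by
    simp only [height_add_smul]
    exact eventually_pos_add_mul ((hy.1 l).lt_or_eq.imp id fun h => ⟨h.symm, hy.2 l h.symm⟩)
  have hall := (eventually_all_finite (finite_Ico (0 : ℤ) (0 + 2 * n))).2 fun l _ => hpos l
  filter_upwards [hall] with ε hε
  refine O.inside_subset_interior_region fun l => ?_
  obtain ⟨m, hm, h, -⟩ := O.exists_mem_Ico l 0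
  exact h ▸ hε m hm

theorem eventually_notMem_of_notMem_entrySet (hy : y ∉ O.entrySet j) :
    ∀ᶠ ε : ℝ in 𝓝[>] 0, y + ε • O.entryDirection j ∉ O.region := by
  obtain ⟨l, hl⟩ : ∃ l, O.height l y < 0 ∨
      O.height l y = 0 ∧ wedge (O.edge l) (O.entryDirection j) < 0 := by
    by_contra! h
    exact hy ⟨fun l => (h l).1, fun l hl =>
      ((h l).2 hl).lt_of_ne' (O.wedge_entryDirection_ne_zero l j)⟩
  have hneg := eventually_pos_add_mul (a := -O.height l y)
    (b := -wedge (O.edge l) (O.entryDirection j)) (by simpa using hl)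
  filter_upwards [hneg] with ε hε hmem
  have := hmem l
  rw [height_add_smul] at this
  linarith

theorem mem_entrySet_of_mem_inside (hy : y ∈ O.inside) : y ∈ O.entrySet j :=
  ⟨fun l => (hy l).le, fun l hl => absurd hl (hy l).ne'⟩

theorem mem_entrySet_of_mem_openEdge (hi : i ∈ Ico j (j + n)) (hy : y ∈ O.openEdge i) :
    y ∈ O.entrySet j := by
  refine ⟨O.openEdge_subset_region i hy, fun l hl => ?_⟩
  obtain ⟨m, ⟨h1, h2⟩, hheight, hedge⟩ := O.exists_mem_Ico l i
  rw [hheight] at hl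
  obtain rfl : i = m := by
    by_contra! hne
    exact (O.height_pos_of_mem_openEdge hy (lt_of_le_of_ne h1 hne) h2).ne' hl
  rw [hedge]
  exact O.wedge_entryDirection_pos hi.1 hi.2

theorem vertex_mem_entrySet (hi : i ∈ Ioo j (j + n)) : O.vertex i ∈ O.entrySet j := by
  refine ⟨O.vertex_mem_region i, fun l hl => ?_⟩
  obtain ⟨m, ⟨h1, h2⟩, hheight, hedge⟩ := O.exists_mem_Ico l i
  rw [hheight] at hl
  rw [hedge]
  rcases h1.eq_or_lt with rfl | h1
  · exact O.wedge_entryDirection_pos hi.1.le hi.2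
  obtain rfl : m = i - 1 + 2 * n := by
    by_contra! hne
    exact (O.height_vertex_pos' h1 (by omega)).ne' hl
  rw [O.edge_periodic]
  exact O.wedge_entryDirection_pos (Int.le_sub_one_of_lt hi.1) (by linarith [hi.2])

theorem lt_of_mem_entrySet (hy : y ∈ O.entrySet j) (hl : O.height l y = 0)
    (h : l < j + 2 * n) : l < j + n := by
  by_contra! hn
  exact (hy.2 l hl).not_gt (O.wedge_entryDirection_neg hn h)

theorem mem_entrySet_iff :
    y ∈ O.entrySet j ↔ y ∈ O.inside ∨ (∃ i ∈ Ico j (j + n), y ∈ O.openEdge i) ∨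
      ∃ i ∈ Ioo j (j + n), y = O.vertex i := by
  constructor
  · intro hy
    by_cases hin : y ∈ O.inside
    · exact Or.inl hin
    obtain ⟨l, hl⟩ : ∃ l, O.height l y = 0 := by
      by_contra! hne
      exact hin fun l => (hy.1 l).lt_of_ne' (hne l)
    obtain ⟨i, hi, hheight, -⟩ := O.exists_mem_Ico l j
    rw [hheight] at hl
    replace hi : i ∈ Ico j (j + n) := ⟨hi.1, O.lt_of_mem_entrySet hy hl hi.2⟩
    have hseg := O.mem_segment_of_height_eq_zero hy.1 hl
    rw [← insert_endpoints_openSegment] at hseg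
    rcases hseg with rfl | rfl | hseg
    · refine Or.inr (Or.inr ⟨i, ⟨hi.1.lt_of_ne ?_, hi.2⟩, rfl⟩)
      rintro rfl
      have hpred : O.height (j - 1 + 2 * n) (O.vertex j) = 0 := by
        rw [O.height_periodic, height_pred_vertex]
      linarith [O.lt_of_mem_entrySet hy hpred (by omega), O.two_le]
    · have hn := O.two_le
      have hi' := O.lt_of_mem_entrySet hy (O.height_vertex_self (i + 1)) (by linarith [hi.2])
      exact Or.inr (Or.inr ⟨i + 1, ⟨Int.lt_add_one_of_le hi.1, hi'⟩, rfl⟩)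
    · exact Or.inr (Or.inl ⟨i, hi, hseg⟩)
  · rintro (hy | ⟨i, hi, hy⟩ | ⟨i, hi, rfl⟩)
    · exact O.mem_entrySet_of_mem_inside hy
    · exact O.mem_entrySet_of_mem_openEdge hi hy
    · exact O.vertex_mem_entrySet hi

theorem disjoint_openEdge (hij : i ≠ j) (hi : i < j + n) (hj : j < i + n) :
    Disjoint (O.openEdge i) (O.openEdge j) := by
  wlog hlt : i < j generalizing i j
  · exact (this hij.symm hj hi (by omega)).symm
  refine disjoint_left.2 fun y hy hy' => ?_
  exact (O.height_pos_of_mem_openEdge hy hlt (by omega)).ne' (O.height_eq_zero_of_mem_openEdge hy')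

theorem vertex_ne_vertex (hij : i ≠ j) (hi : i < j + n) (hj : j < i + n) :
    O.vertex i ≠ O.vertex j := by
  wlog hlt : i < j generalizing i j
  · exact (this hij.symm hj hi (by omega)).symm
  intro heq
  have := O.height_vertex_pos' hlt (by omega)
  rw [heq, height_vertex_self] at this
  exact this.false

theorem vertex_notMem_openEdge (hi : i < j + n) (hj : j < i + n) :
    O.vertex j ∉ O.openEdge i := by
  intro hy
  rcases lt_or_ge i j with hlt | hle
  · exact (O.height_pos_of_mem_openEdge hy hlt (by omega)).ne' (O.height_vertex_self j)
  · have := O.height_pos_of_mem_openEdge (l := j - 1 + 2 * n) hy (by omega) (by omega)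
    rw [O.height_periodic, height_pred_vertex] at this
    exact this.false

theorem disjoint_inside_openEdge (i : ℤ) : Disjoint O.inside (O.openEdge i) :=
  disjoint_left.2 fun _ hy hy' => (hy i).ne' (O.height_eq_zero_of_mem_openEdge hy')

theorem vertex_notMem_inside (i : ℤ) : O.vertex i ∉ O.inside := fun hy =>
  (hy i).ne' (O.height_vertex_self i)

theorem tileCount_entrySet {ι : Type} {x : ι → ℝ × ℝ} {k : ℕ}
    (h : IsKFoldTranslativeTiling O.region x k) (j : ℤ) (v : ℝ × ℝ) :
    tileCount x (O.entrySet j) v = k :=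
  h.tileCount_eq O.isBounded_region (fun _ hy => hy.1) (O.entryDirection j)
    (fun _ => O.eventually_mem_interior_of_mem_entrySet)
    (fun _ => O.eventually_notMem_of_notMem_entrySet) v

theorem tileCount_add_sum_add_sum {ι : Type} {x : ι → ℝ × ℝ} {k : ℕ}
    (h : IsKFoldTranslativeTiling O.region x k) (j : ℤ) (v : ℝ × ℝ) :
    tileCount x O.inside v + ∑ i ∈ Finset.Ico j (j + n), tileCount x (O.openEdge i) v +
      ∑ i ∈ Finset.Ioo j (j + n), tileCount x {O.vertex i} v = k := by
  set edges := ⋃ i ∈ Finset.Ico j (j + n), O.openEdge i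
  set vertices := ⋃ i ∈ Finset.Ioo j (j + n), {O.vertex i}
  have hunion : O.entrySet j = O.inside ∪ edges ∪ vertices := by
    ext y
    simp [edges, vertices, mem_entrySet_iff, or_assoc]
  have hfin {A : Set (ℝ × ℝ)} (hA : A ⊆ O.inside ∪ edges ∪ vertices) :
      {t | v - x t ∈ A}.Finite :=
    h.finite_tiles (O.isBounded_region.subset fun y hy => (hunion.ge (hA hy)).1) v
  have hedges : edges ⊆ O.inside ∪ edges ∪ vertices :=
    subset_union_right.trans subset_union_left
  have hdisj : Disjoint O.inside edges := by
    simp only [edges, disjoint_iUnion_right]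
    exact fun i _ => O.disjoint_inside_openEdge i
  have hdisj' : Disjoint (O.inside ∪ edges) vertices := by
    simp only [vertices, edges, disjoint_iUnion_right, disjoint_singleton_right, mem_union,
      mem_iUnion₂, Finset.mem_Ico, Finset.mem_Ioo]
    rintro i hi (hin | ⟨l, hl, hy⟩)
    · exact O.vertex_notMem_inside i hin
    · exact O.vertex_notMem_openEdge (by omega) (by omega) hy
  rw [← O.tileCount_entrySet h j v, hunion,
    tileCount_union hdisj' (hfin subset_union_left) (hfin subset_union_right),
    tileCount_union hdisj (hfin (subset_union_left.trans subset_union_left)) (hfin hedges),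
    tileCount_biUnion, tileCount_biUnion]
  · intro i hi l hl hne
    rw [Finset.mem_coe, Finset.mem_Ioo] at hi hl
    exact disjoint_singleton.2 (O.vertex_ne_vertex hne (by omega) (by omega))
  · intro i hi
    exact hfin ((subset_biUnion_of_mem (u := fun i => {O.vertex i}) hi).trans subset_union_right)
  · intro i hi l hl hne
    rw [Finset.mem_coe, Finset.mem_Ico] at hi hl
    exact O.disjoint_openEdge hne (by omega) (by omega)
  · exact fun i hi => hfin ((subset_biUnion_of_mem hi).trans hedges)

theorem orient_diagonal_pos (h1 : i - n + 1 < j) (h2 : j < i) :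
    0 < orient (O.vertex i) (O.vertex (i + n + 1)) (O.vertex j) := by
  rw [show i + n + 1 = i - n + 1 + 2 * n by ring, O.vertex_periodic, ← orient_rotate]
  exact O.orient_pos _ _ _ h1 h2 (by omega)

theorem orient_pos_of_mem_entrySet (hn : 3 ≤ n) (hy : y ∈ O.entrySet (i - n + 1)) :
    y ∈ O.inside ∨ y ∈ O.openEdge i ∨ y = O.vertex i ∨
      0 < orient (O.vertex (i + n + 1)) y (O.vertex i) := by
  have hpos {m : ℤ} (h1 : i - n + 1 < m) (h2 : m < i) := O.orient_diagonal_pos h1 h2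
  have hnonneg {m : ℤ} (h1 : i - n + 1 ≤ m) (h2 : m ≤ i) :
      0 ≤ orient (O.vertex i) (O.vertex (i + n + 1)) (O.vertex m) := by
    rcases h1.eq_or_lt with rfl | h1
    · rw [show i + n + 1 = i - n + 1 + 2 * n by ring, O.vertex_periodic, orient_self_right]
    rcases h2.eq_or_lt with rfl | h2
    · rw [orient_self_left]
    · exact (hpos h1 h2).le
  rcases O.mem_entrySet_iff.1 hy with hin | ⟨m, ⟨h1, h2⟩, hm⟩ | ⟨m, ⟨h1, h2⟩, rfl⟩
  · exact Or.inl hin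
  · rcases (Int.le_of_lt_add_one (by omega : m < i + 1)).eq_or_lt with rfl | h3
    · exact Or.inr (Or.inl hm)
    refine Or.inr (Or.inr (Or.inr ?_))
    rw [orient_rotate]
    refine orient_pos_of_mem_openSegment hm (hnonneg h1 h3.le) (hnonneg (by omega) (by omega)) ?_
    rcases h1.eq_or_lt with rfl | h1
    · exact add_pos_of_nonneg_of_pos (hnonneg le_rfl h3.le) (hpos (by omega) (by omega))
    · exact add_pos_of_pos_of_nonneg (hpos h1 h3) (hnonneg (by omega) (by omega))
  · rcases (Int.le_of_lt_add_one (by omega : m < i + 1)).eq_or_lt with rfl | h3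
    · exact Or.inr (Or.inr (Or.inl rfl))
    · exact Or.inr (Or.inr (Or.inr (by rw [orient_rotate]; exact hpos h1 h3)))

theorem le_tileCount_add_edge {ι : Type} {x : ι → ℝ × ℝ} {k : ℕ}
    (h : IsKFoldTranslativeTiling O.region x k) (hn : 3 ≤ n) (i : ℤ) (v : ℝ × ℝ) :
    k ≤ tileCount x O.inside v + tileCount x (O.openEdge i) v + tileCount x {O.vertex i} v +
      tileCount x O.inside (v + O.edge i) := by
  have hcover : O.entrySet (i - n + 1) ⊆
      O.inside ∪ O.openEdge i ∪ {O.vertex i} ∪ (· + O.edge i) ⁻¹' O.inside := fun y hy => by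
    rcases O.orient_pos_of_mem_entrySet hn hy with hin | hedge | rfl | ho
    · exact Or.inl (Or.inl (Or.inl hin))
    · exact Or.inl (Or.inl (Or.inr hedge))
    · exact Or.inl (Or.inr rfl)
    · exact Or.inr (O.add_edge_mem_inside hy.1 ho)
  have hbounded : Bornology.IsBounded
      (O.inside ∪ O.openEdge i ∪ {O.vertex i} ∪ (· + O.edge i) ⁻¹' O.inside) := by
    refine .union (.union (.union ?_ ?_) Bornology.isBounded_singleton) ?_
    · exact O.isBounded_region.subset fun y hy l => (hy l).le
    · exact O.isBounded_region.subset (O.openEdge_subset_region i)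
    · exact (isometry_add_right _).antilipschitz.isBounded_preimage
        (O.isBounded_region.subset fun y hy l => (hy l).le)
  rw [← O.tileCount_entrySet h (i - n + 1) v, ← tileCount_preimage_add]
  refine (tileCount_mono hcover (h.finite_tiles hbounded v)).trans ?_
  refine (tileCount_union_le ..).trans (Nat.add_le_add_right ?_ _)
  refine (tileCount_union_le ..).trans (Nat.add_le_add_right ?_ _)
  exact tileCount_union_le ..

end SymmetricPolygon

section Enumeration

theorem orient_pos_of_mem_extremePoints {K : Set (ℝ × ℝ)} (hK : Convex ℝ K) {a b c d : ℝ × ℝ}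
    (hb : b ∈ extremePoints ℝ K) (ha : a ∈ K) (hc : c ∈ K) (hd : d ∈ K)
    (hab : 0 < orient c a b) (hbd : 0 < orient c b d) (had : 0 < orient c a d) :
    0 < orient a b d := by
  by_contra! hle
  have hmem : b ∈ K \ {b} := by
    refine mem_of_convex_of_orient_nonneg (hK.mem_extremePoints_iff_convex_sdiff.1 hb).2
      (a := c) (b := a) (c := d) ⟨hc, ?_⟩ ⟨ha, ?_⟩ ⟨hd, ?_⟩ had hab.le ?_ ?_
    · rintro rfl
      rw [orient_self_left] at hab
      exact hab.false
    · rintro rfl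
      rw [orient_self_right] at hab
      exact hab.false
    · rintro rfl
      rw [orient_self_right] at hbd
      exact hbd.false
    · rw [orient_rotate, ← neg_orient]
      exact neg_nonneg.2 hle
    · rw [orient_rotate, orient_rotate]
      exact hbd.le
  exact hmem.2 rfl

theorem eq_smul_of_mem_extremePoints {E : Type*} [AddCommGroup E] [Module ℝ E] {K : Set E}
    {a c : E} {t : ℝ} (hadd : c + a ∈ K) (hsub : c - a ∈ K) (h : c + t • a ∈ extremePoints ℝ K)
    (ht : |t| < 1) : a = t • a := by
  obtain ⟨ht0, ht1⟩ := abs_lt.1 ht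
  refine add_left_cancel (a := c) (mem_extremePoints_iff_left.1 h |>.2 _ hadd _ hsub
    ⟨(1 + t) / 2, (1 - t) / 2, by linarith, by linarith, by ring, ?_⟩)
  module

theorem eq_or_eq_neg_of_mem_extremePoints {K : Set (ℝ × ℝ)} {a b c : ℝ × ℝ}
    (ha : c + a ∈ extremePoints ℝ K) (ha' : c - a ∈ K) (hb : c + b ∈ extremePoints ℝ K)
    (hb' : c - b ∈ K) (ha0 : a ≠ 0) (h : wedge a b = 0) : b = a ∨ b = -a := by
  obtain ⟨t, rfl⟩ := exists_eq_smul_of_wedge_eq_zero ha0 h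
  rcases lt_trichotomy |t| 1 with ht | ht | ht
  · exact Or.inl (eq_smul_of_mem_extremePoints ha.1 ha' hb ht).symm
  · rcases eq_or_eq_neg_of_abs_eq ht with rfl | rfl
    · exact Or.inl (one_smul _ _)
    · exact Or.inr (neg_one_smul _ _)
  · have ht0 : t ≠ 0 := by
      rintro rfl
      norm_num at ht
    have hinv : t⁻¹ • t • a = a := inv_smul_smul₀ ht0 a
    refine Or.inl ((eq_smul_of_mem_extremePoints hb.1 hb' (t := t⁻¹) ?_ ?_).trans hinv)
    · rwa [hinv]
    · rw [abs_inv]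
      exact inv_lt_one_of_one_lt₀ ht

/-- The argument of `a`, seen as a complex number. -/
noncomputable def planeArg (a : ℝ × ℝ) : ℝ := Complex.arg ⟨a.1, a.2⟩

theorem wedge_eq_mul_sin (a b : ℝ × ℝ) :
    wedge a b =
      ‖(⟨a.1, a.2⟩ : ℂ)‖ * ‖(⟨b.1, b.2⟩ : ℂ)‖ * Real.sin (planeArg b - planeArg a) := by
  have ha1 := Complex.norm_mul_cos_arg ⟨a.1, a.2⟩
  have ha2 := Complex.norm_mul_sin_arg ⟨a.1, a.2⟩
  have hb1 := Complex.norm_mul_cos_arg ⟨b.1, b.2⟩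
  have hb2 := Complex.norm_mul_sin_arg ⟨b.1, b.2⟩
  rw [wedge_apply, Real.sin_sub, planeArg, planeArg]
  linear_combination -b.2 * ha1 + b.1 * ha2 -
    ‖(⟨a.1, a.2⟩ : ℂ)‖ * Real.cos (Complex.arg ⟨a.1, a.2⟩) * hb2 +
    ‖(⟨a.1, a.2⟩ : ℂ)‖ * Real.sin (Complex.arg ⟨a.1, a.2⟩) * hb1

/-- The half-open upper half-plane, which contains exactly one of `a` and `-a` when `a ≠ 0`. -/
def upperHalf : Set (ℝ × ℝ) := {a | 0 < a.2 ∨ a.2 = 0 ∧ 0 < a.1}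

theorem neg_mem_upperHalf_iff {a : ℝ × ℝ} (ha : a ≠ 0) : -a ∈ upperHalf ↔ a ∉ upperHalf := by
  rcases lt_trichotomy a.2 0 with h2 | h2 | h2
  · simp [upperHalf, h2, h2.ne, h2.le, not_lt]
  · have h1 : a.1 ≠ 0 := fun h1 => ha (Prod.ext h1 h2)
    simp [upperHalf, h2, h1.le_iff_lt]
  · simp [upperHalf, h2, h2.ne', h2.le, not_lt]

theorem wedge_pos_of_planeArg_lt {a b : ℝ × ℝ} (ha : a ∈ upperHalf) (hb : b ∈ upperHalf)
    (h : planeArg a < planeArg b) : 0 < wedge a b := by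
  have hnorm {c : ℝ × ℝ} (hc : c ∈ upperHalf) : 0 < ‖(⟨c.1, c.2⟩ : ℂ)‖ := by
    refine norm_pos_iff.2 fun h0 => ?_
    obtain ⟨h1, h2⟩ := Complex.ext_iff.1 h0
    rcases hc with hc | hc
    · exact hc.ne' h2
    · exact hc.2.ne' h1
  have ha0 : 0 ≤ planeArg a := Complex.arg_nonneg_iff.2 (ha.elim le_of_lt fun h => h.1.ge)
  have hbπ : planeArg b < Real.pi :=
    Complex.arg_lt_pi_iff.2 (hb.symm.imp (fun h => h.2.le) fun h => h.ne')
  rw [wedge_eq_mul_sin]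
  exact mul_pos (mul_pos (hnorm ha) (hnorm hb))
    (Real.sin_pos_of_pos_of_lt_pi (sub_pos.2 h) (by linarith))

theorem wedge_eq_zero_of_planeArg_eq {a b : ℝ × ℝ} (h : planeArg a = planeArg b) :
    wedge a b = 0 := by
  rw [wedge_eq_mul_sin, h, sub_self, Real.sin_zero, mul_zero]

theorem exists_antiperiodic_extension {E : Type*} [AddCommGroup E] {n : ℕ} (hn : 0 < n)
    (f : Fin n → E) : ∃ g : ℤ → E, Function.Antiperiodic g n ∧ ∀ i : Fin n, g i = f i := by
  have hmod (i : ℤ) : (i % n).toNat < n := by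
    have := Int.emod_lt_of_pos i (Int.natCast_pos.2 hn)
    omega
  refine ⟨fun i => (i / n).negOnePow • f ⟨(i % n).toNat, hmod i⟩, fun i => ?_, fun i => ?_⟩
  · have hdiv : (i + n) / n = i / n + 1 := Int.add_ediv_of_dvd_right (dvd_refl _) |>.trans (by
      rw [Int.ediv_self (by omega)])
    simp only [hdiv, Int.negOnePow_succ, Int.add_emod_right, Units.neg_smul]
  · have hi : (i : ℤ) % n = i := Int.emod_eq_of_lt (by omega) (by omega)
    have hi' : (i : ℤ) / n = 0 := Int.ediv_eq_zero_of_lt (by omega) (by omega)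
    simp [hi, hi']

theorem wedge_pos_of_antiperiodic {n : ℕ} (hn : 0 < n) {u : ℤ → ℝ × ℝ}
    (hu : Function.Antiperiodic u n)
    (hpos : ∀ i j : ℤ, 0 ≤ i → i < j → j < n → 0 < wedge (u i) (u j)) {i j : ℤ} (hij : i < j)
    (hj : j < i + n) : 0 < wedge (u i) (u j) := by
  have hper : Function.Periodic (fun l => wedge (u l) (u (l + (j - i)))) n := fun l => by
    simp only [add_right_comm l, hu _, map_neg, LinearMap.neg_apply, neg_neg]
  obtain ⟨m, ⟨h0, hm⟩, h⟩ := hper.exists_mem_Ico₀ (by omega) i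
  simp only [add_sub_cancel] at h
  rw [h]
  rcases lt_or_ge (m + (j - i)) n with hlt | hle
  · exact hpos _ _ h0 (by omega) hlt
  · rw [← sub_add_cancel (m + (j - i)) n, hu, map_neg, neg_wedge]
    exact hpos _ _ (by omega) (by omega) hm

theorem two_mul_card_filter_upperHalf [DecidablePred (· ∈ upperHalf)] {U : Finset (ℝ × ℝ)}
    (h0 : 0 ∉ U) (hneg : ∀ a ∈ U, -a ∈ U) :
    2 * (U.filter (· ∈ upperHalf)).card = U.card := by
  have hne {a : ℝ × ℝ} (ha : a ∈ U) : a ≠ 0 := ne_of_mem_of_not_mem ha h0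
  have hcard : (U.filter (· ∈ upperHalf)).card = (U.filter (· ∉ upperHalf)).card := by
    refine Finset.card_bij' (fun a _ => -a) (fun a _ => -a) ?_ ?_ (fun a _ => neg_neg a)
      fun a _ => neg_neg a
    · intro a ha
      rw [Finset.mem_filter] at ha ⊢
      exact ⟨hneg a ha.1, fun h => (neg_mem_upperHalf_iff (hne ha.1)).1 h ha.2⟩
    · intro a ha
      rw [Finset.mem_filter] at ha ⊢
      exact ⟨hneg a ha.1, (neg_mem_upperHalf_iff (hne ha.1)).2 ha.2⟩
  have := U.card_filter_add_card_filter_not (· ∈ upperHalf)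
  omega

theorem exists_wedge_pos_enumeration {n : ℕ} {H : Finset (ℝ × ℝ)} (hcard : H.card = n)
    (hH : ∀ a ∈ H, a ∈ upperHalf) (hpar : ∀ a ∈ H, ∀ b ∈ H, wedge a b = 0 → a = b) :
    ∃ f : Fin n → ℝ × ℝ, range f = H ∧ ∀ i j, i < j → 0 < wedge (f i) (f j) := by
  have hinj : (H : Set (ℝ × ℝ)).InjOn planeArg := fun a ha b hb hab =>
    hpar a ha b hb (wedge_eq_zero_of_planeArg_eq hab)
  set θ := (H.image planeArg).orderEmbOfFin ((Finset.card_image_of_injOn hinj).trans hcard)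
  have hθ (i : Fin n) : ∃ a ∈ H, planeArg a = θ i :=
    Finset.mem_image.1 (Finset.orderEmbOfFin_mem _ _ i)
  choose f hfH hfθ using hθ
  refine ⟨f, Subset.antisymm (range_subset_iff.2 hfH) fun a ha => ?_, fun i j hij => ?_⟩
  · have hmem : planeArg a ∈ range θ := by
      rw [Finset.range_orderEmbOfFin]
      exact Finset.mem_image_of_mem _ ha
    obtain ⟨i, hi⟩ := hmem
    exact ⟨i, hinj (hfH i) ha ((hfθ i).trans hi)⟩
  · refine wedge_pos_of_planeArg_lt (hH _ (hfH i)) (hH _ (hfH j)) ?_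
    rw [hfθ, hfθ]
    exact θ.strictMono hij

theorem exists_angular_enumeration {n : ℕ} (hn : 0 < n) {U : Finset (ℝ × ℝ)}
    (hcard : U.card = 2 * n) (h0 : 0 ∉ U) (hneg : ∀ a ∈ U, -a ∈ U)
    (hpar : ∀ a ∈ U, ∀ b ∈ U, wedge a b = 0 → b = a ∨ b = -a) :
    ∃ u : ℤ → ℝ × ℝ, Function.Antiperiodic u n ∧ range u = U ∧
      ∀ i j : ℤ, i < j → j < i + n → 0 < wedge (u i) (u j) := by
  classical
  set H := U.filter (· ∈ upperHalf)
  have hH {a : ℝ × ℝ} : a ∈ H ↔ a ∈ U ∧ a ∈ upperHalf := Finset.mem_filter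
  have hHcard : H.card = n := by
    have hH2 : 2 * H.card = U.card := two_mul_card_filter_upperHalf h0 hneg
    omega
  obtain ⟨f, hf, hfpos⟩ := exists_wedge_pos_enumeration hHcard (fun a ha => (hH.1 ha).2)
    fun a ha b hb hab => by
      rw [hH] at ha hb
      rcases hpar a ha.1 b hb.1 hab with rfl | rfl
      · rfl
      · exact absurd ha.2 ((neg_mem_upperHalf_iff (ne_of_mem_of_not_mem ha.1 h0)).1 hb.2)
  obtain ⟨u, hu, huf⟩ := exists_antiperiodic_extension hn f
  have hmem {a : ℝ × ℝ} : a ∈ H ↔ ∃ i : Fin n, u i = a := by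
    rw [← Finset.mem_coe, ← hf]
    simp only [mem_range, huf]
  refine ⟨u, hu, Subset.antisymm (range_subset_iff.2 fun i => ?_) fun a ha => ?_, fun i j =>
    wedge_pos_of_antiperiodic hn hu fun i j hi hij hj => ?_⟩
  · have hper : Function.Periodic (fun l => u l ∈ U) n := fun l => by
      simp only [hu l, eq_iff_iff]
      exact ⟨fun h => neg_neg (u l) ▸ hneg _ h, hneg _⟩
    obtain ⟨m, ⟨hm0, hm⟩, h⟩ := hper.exists_mem_Ico₀ (by omega) i
    lift m to ℕ using hm0
    exact h.mpr (hH.1 (hmem.2 ⟨⟨m, by omega⟩, rfl⟩)).1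
  · by_cases haH : a ∈ upperHalf
    · obtain ⟨i, hi⟩ := hmem.1 (hH.2 ⟨ha, haH⟩)
      exact ⟨i, hi⟩
    · obtain ⟨i, hi⟩ := hmem.1 (hH.2 ⟨hneg a ha, (neg_mem_upperHalf_iff
        (ne_of_mem_of_not_mem ha h0)).2 haH⟩)
      exact ⟨i + n, by rw [hu, hi, neg_neg]⟩
  · lift i to ℕ using hi
    lift j to ℕ using by omega
    have := hfpos ⟨i, by omega⟩ ⟨j, by omega⟩ (by simpa using hij)
    rwa [← huf, ← huf] at this

end Enumeration

section CentralSymmetry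

variable {E : Type*} [AddCommGroup E] [Module ℝ E] {K : Set E} {c v : E}

theorem two_nsmul_sub_mem_extremePoints (hK : ∀ p ∈ K, 2 • c - p ∈ K)
    (hv : v ∈ extremePoints ℝ K) :
    2 • c - v ∈ extremePoints ℝ K := by
  refine mem_extremePoints_iff_left.2 ⟨hK v hv.1, ?_⟩
  rintro y hy z hz ⟨r, s, hr, hs, hrs, h⟩
  have hv' := hv.2 (hK y hy) (hK z hz) ⟨r, s, hr, hs, hrs, ?_⟩
  · rw [← hv', sub_sub_cancel]
  · have h2 : 2 • c = (r + s) • 2 • c := by rw [hrs, one_smul]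
    rw [← sub_sub_cancel (2 • c) v, ← h]
    nth_rewrite 3 [h2]
    module

theorem center_notMem_extremePoints (hK : ∀ p ∈ K, 2 • c - p ∈ K) (hv : v ∈ K) (hne : v ≠ c) :
    c ∉ extremePoints ℝ K := fun hc => by
  have hsub : c - (v - c) ∈ K := by
    rw [sub_sub_eq_add_sub, ← two_nsmul]
    exact hK v hv
  have h := eq_smul_of_mem_extremePoints (t := 0) (a := v - c) (by rwa [add_sub_cancel]) hsub
    (by rwa [zero_smul, add_zero]) (by rw [abs_zero]; exact one_pos)
  exact hne (sub_eq_zero.1 (h.trans (zero_smul ℝ _)))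

end CentralSymmetry

section AntiperiodicVertices

variable {n : ℕ} {u : ℤ → ℝ × ℝ} {K : Set (ℝ × ℝ)} {c : ℝ × ℝ} {i j l : ℤ}

theorem orient_add_eq_wedge (a b c : ℝ × ℝ) : orient c (c + a) (c + b) = wedge a b := by
  simp only [orient, add_sub_cancel_left]

theorem wedge_nonneg_of_antiperiodic (hu : Function.Antiperiodic u n)
    (hpos : ∀ i j : ℤ, i < j → j < i + n → 0 < wedge (u i) (u j)) (hij : i ≤ j)
    (hj : j ≤ i + n) : 0 ≤ wedge (u i) (u j) := by
  rcases hij.eq_or_lt with rfl | hij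
  · rw [wedge_self]
  rcases hj.eq_or_lt with rfl | hj
  · rw [hu, map_neg, wedge_self, neg_zero]
  · exact (hpos i j hij hj).le

theorem orient_pos_of_lt_add (hK : Convex ℝ K) (hc : c ∈ K)
    (huK : ∀ i, c + u i ∈ extremePoints ℝ K)
    (hpos : ∀ i j : ℤ, i < j → j < i + n → 0 < wedge (u i) (u j)) (hij : i < j) (hjl : j < l)
    (hl : l < i + n) : 0 < orient (c + u i) (c + u j) (c + u l) := by
  refine orient_pos_of_mem_extremePoints hK (huK j) (huK i).1 hc (huK l).1 ?_ ?_ ?_ <;>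
    rw [orient_add_eq_wedge]
  · exact hpos i j hij (by omega)
  · exact hpos j l hjl (by omega)
  · exact hpos i l (by omega) hl

-- Either the three points lie in an open half-turn, or the centre lies in their triangle.
theorem orient_pos_of_antiperiodic (hK : Convex ℝ K) (hc : c ∈ K)
    (hu : Function.Antiperiodic u n) (huK : ∀ i, c + u i ∈ extremePoints ℝ K)
    (hpos : ∀ i j : ℤ, i < j → j < i + n → 0 < wedge (u i) (u j)) (hij : i < j) (hjl : j < l)
    (hl : l < i + 2 * n) : 0 < orient (c + u i) (c + u j) (c + u l) := by
  have hper (i : ℤ) : u (i + 2 * n) = u i := hu.periodic_two_mul i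
  rcases lt_or_ge l (i + n) with hln | hln
  · exact orient_pos_of_lt_add hK hc huK hpos hij hjl hln
  rcases lt_or_ge (i + n) j with hjn | hjn
  · rw [← orient_rotate, ← hper i]
    exact orient_pos_of_lt_add hK hc huK hpos hjl hl (by omega)
  rcases lt_or_ge (j + n) l with hlj | hlj
  · rw [orient_rotate, ← hper i, ← hper j]
    exact orient_pos_of_lt_add hK hc huK hpos hl (by omega) (by omega)
  have hli := wedge_nonneg_of_antiperiodic (i := l) (j := i + 2 * n) hu hpos hl.le (by omega)
  rw [hper] at hli
  rw [← orient_add_orient_add_orient _ _ _ c]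
  simp only [orient_add_eq_wedge]
  refine add_pos_of_pos_of_nonneg ?_ hli
  rcases hjn.lt_or_eq with hjn | rfl
  · exact add_pos_of_pos_of_nonneg (hpos i j hij hjn)
      (wedge_nonneg_of_antiperiodic hu hpos hjl.le hlj)
  · exact add_pos_of_nonneg_of_pos (wedge_nonneg_of_antiperiodic hu hpos hij.le le_rfl)
      (hpos (i + n) l hjl (by omega))

end AntiperiodicVertices

theorem exists_antiperiodic_enumeration {P : Set (ℝ × ℝ)} {V : Finset (ℝ × ℝ)}
    (hP : IsConvexPolygon P V) {c : ℝ × ℝ} (hc : ∀ p ∈ P, 2 • c - p ∈ P) {n : ℕ} (hn : 0 < n)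
    (hV : V.card = 2 * n) :
    ∃ u : ℤ → ℝ × ℝ, Function.Antiperiodic u n ∧ (range fun i => c + u i) = V ∧
      ∀ i j : ℤ, i < j → j < i + n → 0 < wedge (u i) (u j) := by
  obtain ⟨hP, hext, -⟩ := hP
  set U := V.image (· - c)
  have hU {a : ℝ × ℝ} : a ∈ U ↔ c + a ∈ V := by
    simp [U, sub_eq_iff_eq_add']
  have hUext {a : ℝ × ℝ} (ha : a ∈ U) : c + a ∈ extremePoints ℝ P := hext _ (hU.1 ha)
  have hcard : U.card = 2 * n := by
    rw [Finset.card_image_of_injective _ sub_left_injective, hV]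
  have hneg : ∀ a ∈ U, -a ∈ U := fun a ha => by
    have h := two_nsmul_sub_mem_extremePoints hc (hUext ha)
    rw [hP] at h
    rw [hU, show c + -a = 2 • c - (c + a) by abel]
    exact extremePoints_convexHull_subset h
  have hUsub {a : ℝ × ℝ} (ha : a ∈ U) : c - a ∈ P := by
    simpa [sub_eq_add_neg] using (hUext (hneg a ha)).1
  have h0 : 0 ∉ U := fun h0 => by
    obtain ⟨v, hv, hne⟩ := Finset.exists_mem_ne (by omega : 1 < V.card) c
    exact center_notMem_extremePoints hc (hext v hv).1 hne (by simpa using hUext h0)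
  obtain ⟨u, hu, hrange, hpos⟩ := exists_angular_enumeration hn hcard h0 hneg
    fun a ha b hb => eq_or_eq_neg_of_mem_extremePoints (hUext ha) (hUsub ha) (hUext hb) (hUsub hb)
      (ne_of_mem_of_not_mem ha h0)
  refine ⟨u, hu, ?_, hpos⟩
  change range ((c + ·) ∘ u) = V
  rw [range_comp, hrange]
  simp only [U, Finset.coe_image, image_image, add_sub_cancel, image_id']

namespace SymmetricPolygon

theorem exists_of_antiperiodic {K : Set (ℝ × ℝ)} (hK : Convex ℝ K) {n : ℕ} (hn : 2 ≤ n)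
    {c : ℝ × ℝ} {u : ℤ → ℝ × ℝ} (hu : Function.Antiperiodic u n)
    (huK : ∀ i, c + u i ∈ extremePoints ℝ K)
    (hpos : ∀ i j : ℤ, i < j → j < i + n → 0 < wedge (u i) (u j)) :
    ∃ O : SymmetricPolygon n, O.vertex = fun i => c + u i := by
  have hc : c ∈ K := by
    have h := hK.midpoint_mem (huK 0).1 (huK (0 + n)).1
    rwa [hu, midpoint_eq_smul_add, show c + u 0 + (c + -u 0) = (2 : ℝ) • c by module, smul_smul,
      invOf_mul_self, one_smul] at h
  refine ⟨⟨c, fun i => c + u i, hn, fun i => ?_, fun i j l hij hjl hl =>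
    orient_pos_of_antiperiodic hK hc hu huK hpos hij hjl hl⟩, rfl⟩
  rw [hu, two_nsmul]
  abel

theorem exists_region_eq {P : Set (ℝ × ℝ)} {V : Finset (ℝ × ℝ)} (hP : IsConvexPolygon P V)
    (hsym : IsCentrallySymmetric P) {n : ℕ} (hn : 2 ≤ n) (hV : V.card = 2 * n) :
    ∃ O : SymmetricPolygon n, O.region = P := by
  obtain ⟨c, hc⟩ := hsym
  obtain ⟨u, hu, hrange, hpos⟩ := exists_antiperiodic_enumeration hP hc (by omega) hV
  obtain ⟨hP, hext, -⟩ := hP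
  have huP (i : ℤ) : c + u i ∈ extremePoints ℝ P := by
    refine hext _ ?_
    rw [← Finset.mem_coe, ← hrange]
    exact mem_range_self i
  obtain ⟨O, hO⟩ := exists_of_antiperiodic (hP ▸ convex_convexHull ℝ _) hn hu huP hpos
  exact ⟨O, by rw [O.region_eq_convexHull, hO, hrange, hP]⟩

end SymmetricPolygon

/-- The relations between the numbers of octagons containing a given point in their interior
(`F`), on their `i`-th open edge (`e i`) and at their `i`-th vertex (`w i`) in a `k`-fold tiling:
each of the eight half-turns of directions is covered `k` times. -/
structure IsAngularlyBalanced (k F : ℕ) (e w : ℤ → ℕ) : Prop where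
  edge_periodic : Function.Periodic e 8
  vertex_periodic : Function.Periodic w 8
  sum_eq (j : ℤ) : F + (e j + e (j + 1) + e (j + 2) + e (j + 3)) +
    (w (j + 1) + w (j + 2) + w (j + 3)) = k

namespace IsAngularlyBalanced

variable {k F : ℕ} {e w : ℤ → ℕ} (h : IsAngularlyBalanced k F e w) {i j m : ℤ}

include h

theorem edge_add_vertex (j : ℤ) : e j + w (j + 1) = e (j + 4) + w (j + 4) := by
  have h0 := h.sum_eq j
  have h1 := h.sum_eq (j + 1)
  simp only [add_assoc, Int.reduceAdd] at h0 h1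
  omega

theorem vertex_add_opposite (i j : ℤ) : w i + w (i + 4) = w j + w (j + 4) := by
  have hper : Function.Periodic (fun l => w l + w (l + 4)) 1 := fun l => by
    have h0 := h.edge_add_vertex l
    have h4 := h.edge_add_vertex (l + 4)
    simp only [add_assoc, Int.reduceAdd, h.edge_periodic l, h.vertex_periodic l] at h0 h4 ⊢
    omega
  simpa using hper.int_mul (i - j) j

theorem two_mul_add_sum (j : ℤ) :
    2 * F + (e j + e (j + 1) + e (j + 2) + e (j + 3) + e (j + 4) + e (j + 5) + e (j + 6) +
      e (j + 7)) + 3 * (w j + w (j + 4)) = 2 * k := by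
  have h0 := h.sum_eq j
  have h4 := h.sum_eq (j + 4)
  have h1 := h.vertex_add_opposite (j + 1) j
  have h2 := h.vertex_add_opposite (j + 2) j
  have h3 := h.vertex_add_opposite (j + 3) j
  simp only [add_assoc, Int.reduceAdd] at h0 h1 h2 h3 h4 ⊢
  omega

theorem add_two_le (hi : 0 < w i) : F + 2 ≤ k := by
  have := h.two_mul_add_sum i
  omega

theorem closedEdge_pos (hi : 0 < w i) (j : ℤ) : 0 < e j + w j + w (j + 1) := by
  have h1 := h.edge_add_vertex j
  have h2 := h.vertex_add_opposite j i
  omega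

theorem exists_edge_pos (hF : F + 2 = k) : ∃ m, 0 < e m := by
  by_contra! he
  have := h.two_mul_add_sum 0
  simp only [Nat.le_zero.1 (he _)] at this
  omega

theorem vertex_pos_of_edge_pos (hF : F + 2 = k) (hi : 0 < w i) (hm : 0 < e m) :
    0 < w (m + 2) ∧ 0 < w (m + 4) ∧ 0 < w (m + 5) ∧ 0 < w (m + 7) := by
  have hsum := h.two_mul_add_sum m
  have hi' := h.vertex_add_opposite m i
  have h0 := h.edge_add_vertex m
  have h1 := h.edge_add_vertex (m + 1)
  have h2 := h.edge_add_vertex (m + 2)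
  have w1 := h.vertex_add_opposite (m + 1) m
  have w2 := h.vertex_add_opposite (m + 2) m
  have w3 := h.vertex_add_opposite (m + 3) m
  simp only [add_assoc, Int.reduceAdd] at *
  omega

-- Each of the four opposite pairs contains some `i` with `0 < w i`. If the inequality failed for
-- all of them, summing would force `k = F + 3`, `e = 0` and `w` to alternate between `0` and `2`,
-- against `w 0 + w 4 = 2`.
theorem exists_vertex_pos_of_add_three_le (hF : F + 3 ≤ k) (hi : 0 < w i) :
    ∃ i, 0 < w i ∧ F + e i + w i + 2 ≤ k := by
  by_contra! hlt
  have hsum := h.two_mul_add_sum 0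
  have := h.vertex_add_opposite i 0
  have w1 := h.vertex_add_opposite 1 0
  have w2 := h.vertex_add_opposite 2 0
  have w3 := h.vertex_add_opposite 3 0
  have s0 := h.edge_add_vertex 0
  have s1 := h.edge_add_vertex 1
  have s2 := h.edge_add_vertex 2
  have s3 := h.edge_add_vertex 3
  have l3 := hlt 3
  have l4 := hlt 4
  have l5 := hlt 5
  have l6 := hlt 6
  have l7 := hlt 7
  simp only [zero_add, Int.reduceAdd] at *
  omega

end IsAngularlyBalanced

namespace SymmetricPolygon

theorem add_smul_edge_mem_inside {n : ℕ} (O : SymmetricPolygon n) {y : ℝ × ℝ} {i j : ℤ} {r : ℝ}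
    (hij : i - n + 1 < j) (hji : j + 1 < i)
    (hy : y ∈ segment ℝ (O.vertex j) (O.vertex (j + 1))) (hr : r ∈ Ioc (0 : ℝ) 1) :
    y + r • O.edge i ∈ O.inside := by
  have hl := O.orient_diagonal_pos hij (by omega)
  have hr' := O.orient_diagonal_pos (j := j + 1) (by omega) hji
  have hregion : y ∈ O.region :=
    O.convex_region.segment_subset (O.vertex_mem_region j) (O.vertex_mem_region _) hy
  refine O.add_smul_mem_inside hregion (O.add_edge_mem_inside hregion ?_) hr.1 hr.2
  rw [orient_rotate]
  rw [← insert_endpoints_openSegment] at hy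
  rcases hy with rfl | rfl | hy
  · exact hl
  · exact hr'
  · exact orient_pos_of_mem_openSegment hy hl.le hr'.le (add_pos hl hr')

section Node

variable {n : ℕ} {O : SymmetricPolygon n} {ι : Type} {x : ι → ℝ × ℝ} {k : ℕ} {v : ℝ × ℝ}

/-- `v` is a vertex of some translate of the polygon. -/
def IsNode (O : SymmetricPolygon n) (x : ι → ℝ × ℝ) (v : ℝ × ℝ) : Prop :=
  ∃ i t, v - x t = O.vertex i

theorem tileCount_vertex_pos_iff (h : IsKFoldTranslativeTiling O.region x k) {i : ℤ} :
    0 < tileCount x {O.vertex i} v ↔ ∃ t, v - x t = O.vertex i :=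
  tileCount_pos_iff (h.finite_tiles Bornology.isBounded_singleton v)

theorem tileCount_openEdge_pos_iff (h : IsKFoldTranslativeTiling O.region x k) {i : ℤ} :
    0 < tileCount x (O.openEdge i) v ↔ ∃ t, v - x t ∈ O.openEdge i :=
  tileCount_pos_iff (h.finite_tiles (O.isBounded_region.subset (O.openEdge_subset_region i)) v)

theorem finite_inside_tiles (h : IsKFoldTranslativeTiling O.region x k) (v : ℝ × ℝ) :
    {t | v - x t ∈ O.inside}.Finite :=
  h.finite_tiles (O.isBounded_region.subset fun _ hy l => (hy l).le) v

theorem IsNode.exists_tileCount_pos (h : IsKFoldTranslativeTiling O.region x k)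
    (hv : IsNode O x v) : ∃ i, 0 < tileCount x {O.vertex i} v :=
  hv.imp fun _ => (tileCount_vertex_pos_iff h).2

theorem exists_isNode (h : IsKFoldTranslativeTiling O.region x k) (hk : 0 < k) :
    ∃ v, IsNode O x v := by
  obtain ⟨t, -⟩ := (tileCount_pos_iff (h.finite_tiles O.isBounded_region 0)).1
    (hk.trans_le (h.le_tileCount O.isBounded_region 0))
  exact ⟨x t + O.vertex 0, 0, t, add_sub_cancel_left _ _⟩

end Node

section Octagon

variable {O : SymmetricPolygon 4} {ι : Type} {x : ι → ℝ × ℝ} {k : ℕ} {v : ℝ × ℝ} {m : ℤ} {s : ℝ}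

theorem isAngularlyBalanced (h : IsKFoldTranslativeTiling O.region x k) (v : ℝ × ℝ) :
    IsAngularlyBalanced k (tileCount x O.inside v) (fun i => tileCount x (O.openEdge i) v)
      (fun i => tileCount x {O.vertex i} v) where
  edge_periodic i := congrArg (tileCount x · v) (O.openEdge_periodic i)
  vertex_periodic i := congrArg (fun y => tileCount x {y} v) (O.vertex_periodic i)
  sum_eq j := by
    have hIco : Finset.Ico j (j + 4) = {j, j + 1, j + 2, j + 3} := by ext; simp; omega
    have hIoo : Finset.Ioo j (j + 4) = {j + 1, j + 2, j + 3} := by ext; simp; omega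
    have := O.tileCount_add_sum_add_sum h j v
    rw [Nat.cast_ofNat, hIco, hIoo] at this
    simpa [add_assoc] using this

theorem edge_add_four (O : SymmetricPolygon 4) (i : ℤ) : O.edge (i + 4) = -O.edge i :=
  O.edge_antiperiodic i

theorem edge_add_eight (O : SymmetricPolygon 4) (i : ℤ) : O.edge (i + 8) = O.edge i :=
  O.edge_periodic i

theorem vertex_add_eight (O : SymmetricPolygon 4) (i : ℤ) : O.vertex (i + 8) = O.vertex i :=
  O.vertex_periodic i

theorem vertex_add_two {n : ℕ} (O : SymmetricPolygon n) (i : ℤ) :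
    O.vertex (i + 2) = O.vertex i + O.edge i + O.edge (i + 1) := by
  rw [vertex_add_edge, vertex_add_edge, add_assoc, one_add_one_eq_two]

theorem vertex_add_three {n : ℕ} (O : SymmetricPolygon n) (i : ℤ) :
    O.vertex (i + 3) = O.vertex i + O.edge i + O.edge (i + 1) + O.edge (i + 2) := by
  rw [← vertex_add_two, vertex_add_edge, add_assoc, two_add_one_eq_three]

theorem vertex_add_seven (O : SymmetricPolygon 4) (i : ℤ) :
    O.vertex (i + 7) = O.vertex i + O.edge (i + 3) := by
  rw [← O.vertex_add_eight i, show i + 8 = i + 7 + 1 by ring, ← O.vertex_add_edge,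
    show i + 7 = i + 3 + 4 by ring, edge_add_four, neg_add_cancel_right]

theorem vertex_add_six (O : SymmetricPolygon 4) (i : ℤ) :
    O.vertex (i + 6) = O.vertex i + O.edge (i + 3) + O.edge (i + 2) := by
  rw [← vertex_add_seven, show i + 7 = i + 6 + 1 by ring, ← O.vertex_add_edge,
    show i + 6 = i + 2 + 4 by ring, edge_add_four, neg_add_cancel_right]

theorem IsNode.exists_mem_segment (h : IsKFoldTranslativeTiling O.region x k)
    (hv : IsNode O x v) (j : ℤ) :
    ∃ t, v - x t ∈ segment ℝ (O.vertex j) (O.vertex (j + 1)) := by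
  obtain ⟨i, hi⟩ := hv.exists_tileCount_pos h
  have hpos := (isAngularlyBalanced h v).closedEdge_pos hi j
  obtain he | hl | hr : 0 < tileCount x (O.openEdge j) v ∨ 0 < tileCount x {O.vertex j} v ∨
      0 < tileCount x {O.vertex (j + 1)} v := by omega
  · exact ((tileCount_openEdge_pos_iff h).1 he).imp fun _ ht => openSegment_subset_segment _ _ _ ht
  · exact ((tileCount_vertex_pos_iff h).1 hl).imp fun _ ht => by
      rw [ht]; exact left_mem_segment _ _ _
  · exact ((tileCount_vertex_pos_iff h).1 hr).imp fun _ ht => by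
      rw [ht]; exact right_mem_segment _ _ _

theorem IsNode.two_le_tileCount_add_edge (h : IsKFoldTranslativeTiling O.region x k)
    (hv : IsNode O x v) {i j : ℤ} (hij : i = j + 2) (hs : s ∈ Ioo (0 : ℝ) 1) {t : ι}
    (ht : v + s • O.edge i - x t ∈ segment ℝ (O.vertex j) (O.vertex (j + 1))) :
    2 ≤ tileCount x O.inside (v + O.edge i) := by
  obtain ⟨u, hu⟩ := hv.exists_mem_segment h j
  have hmove {y : ℝ × ℝ} {r : ℝ} :=
    O.add_smul_edge_mem_inside (y := y) (r := r) (i := i) (j := j) (by lia) (by lia)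
  have hu1 := hmove hu (right_mem_Ioc.2 one_pos)
  have hus := hmove hu (Ioo_subset_Ioc_self hs)
  have ht1 := hmove ht (r := 1 - s) ⟨by linarith [hs.2], by linarith [hs.1]⟩
  rw [one_smul, sub_add_eq_add_sub] at hu1
  rw [show v + s • O.edge i - x t + (1 - s) • O.edge i = v + O.edge i - x t by module] at ht1
  rw [sub_add_eq_add_sub] at hus
  refine (one_lt_ncard_iff (finite_inside_tiles h _)).2 ⟨t, u, ht1, hu1, ?_⟩
  rintro rfl
  exact (hus j).ne' (O.height_eq_zero_of_mem_segment ht)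

/-- A node in the interior of exactly `k - 2` octagons of a `k`-fold tiling, the largest number
possible for a node. -/
def IsTight (O : SymmetricPolygon 4) (x : ι → ℝ × ℝ) (k : ℕ) (v : ℝ × ℝ) : Prop :=
  IsNode O x v ∧ tileCount x O.inside v + 2 = k

theorem IsNode.isTight (h : IsKFoldTranslativeTiling O.region x k) (hk : k ≤ 4)
    (hv : IsNode O x v) (hF : 2 ≤ tileCount x O.inside v) : IsTight O x k v := by
  obtain ⟨i, hi⟩ := hv.exists_tileCount_pos h
  have := (isAngularlyBalanced h v).add_two_le hi
  exact ⟨hv, by omega⟩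

theorem exists_isTight (h : IsKFoldTranslativeTiling O.region x k) (hk0 : 0 < k) (hk : k ≤ 4) :
    ∃ v, IsTight O x k v := by
  obtain ⟨v, hv⟩ := exists_isNode h hk0
  obtain ⟨i, hi⟩ := hv.exists_tileCount_pos h
  have hbal := isAngularlyBalanced h v
  rcases (hbal.add_two_le hi).eq_or_lt with hF | hF
  · exact ⟨v, hv, hF⟩
  obtain ⟨j, hj, hjk⟩ := hbal.exists_vertex_pos_of_add_three_le hF hi
  obtain ⟨t, ht⟩ := (tileCount_vertex_pos_iff h).1 hj
  have hnode : IsNode O x (v + O.edge j) :=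
    ⟨j + 1, t, by rw [← sub_add_eq_add_sub, ht, O.vertex_add_edge]⟩
  have := O.le_tileCount_add_edge h (by norm_num) j v
  exact ⟨_, hnode.isTight h hk (by omega)⟩

/-- `v` is tight and divides the `m`-th edge of some octagon of the tiling in the ratio
`s : 1 - s`. -/
def IsTightOnEdge (O : SymmetricPolygon 4) (x : ι → ℝ × ℝ) (k : ℕ) (v : ℝ × ℝ) (m : ℤ) (s : ℝ) :
    Prop :=
  IsTight O x k v ∧ s ∈ Ioo (0 : ℝ) 1 ∧ ∃ t, v - x t = O.vertex m + s • O.edge m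

theorem IsTight.exists_isTightOnEdge (h : IsKFoldTranslativeTiling O.region x k)
    (hv : IsTight O x k v) : ∃ m s, IsTightOnEdge O x k v m s := by
  obtain ⟨m, hm⟩ := (isAngularlyBalanced h v).exists_edge_pos hv.2
  obtain ⟨t, ht⟩ := (tileCount_openEdge_pos_iff h).1 hm
  rw [openEdge, openSegment_eq_image'] at ht
  obtain ⟨s, hs, ht⟩ := ht
  exact ⟨m, s, hv, hs, t, ht.symm⟩

namespace IsTightOnEdge

theorem exists_eq_vertex (h : IsKFoldTranslativeTiling O.region x k)
    (hv : IsTightOnEdge O x k v m s) :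
    (∃ t, v - x t = O.vertex (m + 2)) ∧ (∃ t, v - x t = O.vertex (m + 4)) ∧
      (∃ t, v - x t = O.vertex (m + 5)) ∧ ∃ t, v - x t = O.vertex (m + 7) := by
  obtain ⟨⟨hnode, hF⟩, hs, t, ht⟩ := hv
  obtain ⟨i, hi⟩ := hnode.exists_tileCount_pos h
  have hm : 0 < tileCount x (O.openEdge m) v := by
    refine (tileCount_openEdge_pos_iff h).2 ⟨t, ?_⟩
    rw [openEdge, openSegment_eq_image']
    exact ⟨s, hs, ht.symm⟩
  simpa only [tileCount_vertex_pos_iff h] using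
    (isAngularlyBalanced h v).vertex_pos_of_edge_pos hF hi hm

theorem isNode_sub (hv : IsTightOnEdge O x k v m s) : IsNode O x (v - s • O.edge m) := by
  obtain ⟨-, -, t, ht⟩ := hv
  exact ⟨m, t, by rw [sub_right_comm, ht, add_sub_cancel_right]⟩

theorem isNode_add (hv : IsTightOnEdge O x k v m s) : IsNode O x (v + (1 - s) • O.edge m) := by
  obtain ⟨-, -, t, ht⟩ := hv
  refine ⟨m + 1, t, ?_⟩
  rw [← sub_add_eq_add_sub, ht, ← O.vertex_add_edge]
  module

theorem sub (h : IsKFoldTranslativeTiling O.region x k) (hk : k ≤ 4)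
    (hv : IsTightOnEdge O x k v m s) : IsTightOnEdge O x k (v - s • O.edge m) (m + 4) s := by
  obtain ⟨⟨t₂, ht₂⟩, ⟨t₄, ht₄⟩, -, -⟩ := hv.exists_eq_vertex h
  have hs := hv.2.1
  have hmid : v + (1 - s) • O.edge m + (1 - s) • O.edge (m + 4) = v := by
    rw [edge_add_four]; module
  have hend : v + (1 - s) • O.edge m + O.edge (m + 4) = v - s • O.edge m := by
    rw [edge_add_four]; module
  have htwo := hv.isNode_add.two_le_tileCount_add_edge h (i := m + 4) (j := m + 2) (s := 1 - s)
    (t := t₂) (by ring) ⟨by linarith [hs.2], by linarith [hs.1]⟩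
    (by rw [hmid, ht₂]; exact left_mem_segment _ _ _)
  rw [hend] at htwo
  refine ⟨hv.isNode_sub.isTight h hk htwo, hs, t₄, ?_⟩
  rw [sub_right_comm, ht₄, edge_add_four, smul_neg, sub_eq_add_neg]

theorem add (h : IsKFoldTranslativeTiling O.region x k) (hk : k ≤ 4)
    (hv : IsTightOnEdge O x k v m s) :
    IsTightOnEdge O x k (v + (1 - s) • O.edge m) (m + 4) s := by
  obtain ⟨-, -, ⟨t₅, ht₅⟩, ⟨t₇, ht₇⟩⟩ := hv.exists_eq_vertex h
  have hs := hv.2.1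
  have hend : v - s • O.edge m + O.edge (m + 8) = v + (1 - s) • O.edge m := by
    rw [edge_add_eight]; module
  have htwo := hv.isNode_sub.two_le_tileCount_add_edge h (i := m + 8) (j := m + 6) (t := t₇)
    (by ring) hs
    (by rw [edge_add_eight, sub_add_cancel, ht₇, show m + 7 = m + 6 + 1 by ring]
        exact right_mem_segment _ _ _)
  rw [hend] at htwo
  refine ⟨hv.isNode_add.isTight h hk htwo, hs, t₅, ?_⟩
  rw [← sub_add_eq_add_sub, ht₅, show m + 5 = m + 4 + 1 by ring, ← O.vertex_add_edge,
    edge_add_four]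
  module

theorem exists_add_smul_mem_inside_left (h : IsKFoldTranslativeTiling O.region x k)
    (hv : IsTightOnEdge O x k v m s) :
    ∃ t, v - x t = O.vertex (m + 2) ∧
      ∀ r ∈ Ioc (0 : ℝ) 1, v + r • O.edge (m + 4) - x t ∈ O.inside := by
  obtain ⟨⟨t, ht⟩, -⟩ := hv.exists_eq_vertex h
  refine ⟨t, ht, fun r hr => ?_⟩
  rw [← sub_add_eq_add_sub, ht]
  exact O.add_smul_edge_mem_inside (by lia) (by lia) (left_mem_segment _ _ _) hr

theorem exists_add_smul_mem_inside_right (h : IsKFoldTranslativeTiling O.region x k)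
    (hv : IsTightOnEdge O x k v m s) :
    ∃ t, v - x t = O.vertex (m + 7) ∧
      ∀ r ∈ Ioc (0 : ℝ) 1, v + r • O.edge m - x t ∈ O.inside := by
  obtain ⟨-, -, -, ⟨t, ht⟩⟩ := hv.exists_eq_vertex h
  refine ⟨t, ht, fun r hr => ?_⟩
  rw [← sub_add_eq_add_sub, ht, ← edge_add_eight, show m + 7 = m + 6 + 1 by ring]
  exact O.add_smul_edge_mem_inside (by lia) (by lia) (right_mem_segment _ _ _) hr

theorem exists_mem_inside_of_sub (h : IsKFoldTranslativeTiling O.region x k) (hk : k ≤ 4)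
    (hv : IsTightOnEdge O x k v m s) :
    (∃ t, v - x t = O.vertex m + s • O.edge m + O.edge (m + 2) + O.edge (m + 3) ∧
      v - x t ∈ O.inside) ∧
    ∃ t, v - x t = O.vertex m + O.edge m + O.edge (m + 3) ∧ v - x t ∈ O.inside := by
  have ha := hv.sub h hk
  obtain ⟨t, ht, hin⟩ := ha.exists_add_smul_mem_inside_left h
  obtain ⟨t', ht', hin'⟩ := (ha.add h hk).exists_add_smul_mem_inside_right h
  rw [show m + 4 + 2 = m + 6 by ring, vertex_add_six] at ht
  rw [show m + 4 + 4 + 7 = m + 7 + 8 by ring, vertex_add_eight, vertex_add_seven,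
    edge_add_four] at ht'
  rw [show m + 4 + 4 = m + 8 by ring, edge_add_eight] at hin hin'
  refine ⟨⟨t, ?_, ?_⟩, t', ?_, ?_⟩
  · linear_combination (norm := module) ht
  · convert hin s (Ioo_subset_Ioc_self hv.2.1) using 1
    module
  · linear_combination (norm := module) ht'
  · convert hin' 1 (right_mem_Ioc.2 one_pos) using 1
    rw [edge_add_four]
    module

theorem exists_mem_inside_of_add (h : IsKFoldTranslativeTiling O.region x k) (hk : k ≤ 4)
    (hv : IsTightOnEdge O x k v m s) :
    (∃ t, v - x t = O.vertex m + s • O.edge m + O.edge (m + 1) + O.edge (m + 2) ∧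
      v - x t ∈ O.inside) ∧
    ∃ t, v - x t = O.vertex m + O.edge (m + 1) ∧ v - x t ∈ O.inside := by
  have ha := hv.add h hk
  obtain ⟨t, ht, hin⟩ := ha.exists_add_smul_mem_inside_right h
  obtain ⟨t', ht', hin'⟩ := (ha.sub h hk).exists_add_smul_mem_inside_left h
  rw [show m + 4 + 7 = m + 3 + 8 by ring, vertex_add_eight, vertex_add_three] at ht
  rw [show m + 4 + 4 + 2 = m + 2 + 8 by ring, vertex_add_eight, vertex_add_two,
    edge_add_four] at ht'
  rw [show m + 4 + 4 + 4 = m + 4 + 8 by ring, edge_add_eight] at hin'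
  refine ⟨⟨t, ?_, ?_⟩, t', ?_, ?_⟩
  · linear_combination (norm := module) ht
  · convert hin (1 - s) ⟨sub_pos.2 hv.2.1.2, sub_le_self 1 hv.2.1.1.le⟩ using 1
    rw [edge_add_four]
    module
  · linear_combination (norm := module) ht'
  · convert hin' 1 (right_mem_Ioc.2 one_pos) using 1
    rw [edge_add_four]
    module

theorem three_le_tileCount_inside (h : IsKFoldTranslativeTiling O.region x k) (hk : k ≤ 4)
    (hv : IsTightOnEdge O x k v m s) : 3 ≤ tileCount x O.inside v := by
  obtain ⟨⟨t₁, h₁, hin₁⟩, t₂, h₂, hin₂⟩ := hv.exists_mem_inside_of_sub h hk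
  obtain ⟨⟨t₃, h₃, hin₃⟩, t₄, h₄, hin₄⟩ := hv.exists_mem_inside_of_add h hk
  have hindep {r : ℝ} : r • O.edge m ≠ O.edge (m + 2) := fun heq => by
    have := O.wedge_edge_pos (i := m) (j := m + 2) (by lia) (by norm_num)
    simp [← heq] at this
  have h13 : t₁ ≠ t₃ := by
    rintro rfl
    have heq : O.edge (m + 1) = O.edge (m + 3) := by linear_combination (norm := module) h₁ - h₃
    have := O.wedge_edge_pos (i := m + 1) (j := m + 3) (by lia) (by push_cast; lia)
    simp [heq] at this
  have h12 : t₁ ≠ t₂ := by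
    rintro rfl
    exact hindep (r := 1 - s) (by linear_combination (norm := module) h₁ - h₂)
  have h34 : t₃ ≠ t₄ := by
    rintro rfl
    exact hindep (r := -s) (by linear_combination (norm := module) h₃ - h₄)
  have hlt := two_lt_ncard_iff (finite_inside_tiles h v)
  by_cases h14 : t₁ = t₄
  · subst h14
    refine hlt.2 ⟨t₁, t₂, t₃, hin₁, hin₂, hin₃, h12, h13, ?_⟩
    rintro rfl
    refine hindep (r := (1 - 2 * s) / 2) ?_
    linear_combination (norm := module) (1 / 2 : ℝ) • (h₁ - h₄ + h₃ - h₂)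
  · exact hlt.2 ⟨t₁, t₃, t₄, hin₁, hin₃, hin₄, h13, h14, h34⟩

end IsTightOnEdge

theorem five_le_of_isKFoldTranslativeTiling (h : IsKFoldTranslativeTiling O.region x k)
    (hk0 : 0 < k) : 5 ≤ k := by
  by_contra! hlt
  have hk : k ≤ 4 := Nat.le_of_lt_succ hlt
  obtain ⟨v, hv⟩ := exists_isTight h hk0 hk
  obtain ⟨m, s, hms⟩ := hv.exists_isTightOnEdge h
  have := hms.three_le_tileCount_inside h hk
  have := hv.2
  omega

end Octagon

end SymmetricPolygon

/-- If a centrally symmetric convex octagon (a convex polygon with exactly 8 vertices,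
symmetric about a point) admits a `k`-fold translative tiling of the plane, then
`k ≥ 5`; that is, `τ(P) ≥ 5`. -/
theorem tau_octagon_ge (P : Set (ℝ × ℝ)) (V : Finset (ℝ × ℝ))
    (hP : IsConvexPolygon P V) (hV : V.card = 8) (hsym : IsCentrallySymmetric P)
    (k : ℕ) (hk : 0 < k) (ι : Type) (x : ι → ℝ × ℝ)
    (htile : IsKFoldTranslativeTiling P x k) :
    5 ≤ k := by
  obtain ⟨O, rfl⟩ :=
    SymmetricPolygon.exists_region_eq (n := 4) hP hsym (by norm_num) (by rw [hV])
  exact SymmetricPolygon.five_le_of_isKFoldTranslativeTiling htile hk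
end
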